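/- arXiv:2201.01382 — 4 statements merged into one kernel-verified Lean document; each statement's English description precedes it below -/
import Mathlib

section
/- Let d ≥ 2, let ν be a symmetric probability measure on ℝ^d whose support is contained in a ball of radius R, and let μ = γ_d ⋆ ν (which is then symmetric). Then for every smooth compactly supported function g : ℝ^d → ℝ, Var_μ(g) ≤ (d(d+3)/(d−1)) · e^{R²} · ∫_{ℝ^d} ‖∇g(x)‖² / (1 + e^{−R²}·‖x‖²) dμ(x). -/
open MeasureTheory Real Set
open scoped ENNReal NNReal

noncomputable section

/-- `ℝ^d` as a Euclidean space. -/
abbrev Ed (d : ℕ) : Type := EuclideanSpace ℝ (Fin d)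

/-- The standard Gaussian measure `γ_d` on `ℝ^d` (mean 0, identity covariance). -/
def stdGaussian (d : ℕ) : Measure (Ed d) :=
  (volume : Measure (Ed d)).withDensity
    fun x => ENNReal.ofReal ((2 * π) ^ (-(d : ℝ) / 2) * Real.exp (-‖x‖ ^ 2 / 2))

/-- The centered Gaussian measure on `ℝ^d` with covariance `a·Id`. -/
def gaussianCov (d : ℕ) (a : ℝ) : Measure (Ed d) :=
  (volume : Measure (Ed d)).withDensity
    fun x => ENNReal.ofReal ((2 * π * a) ^ (-(d : ℝ) / 2) * Real.exp (-‖x‖ ^ 2 / (2 * a)))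

/-- The Hessian quadratic form of `f` at `x`, evaluated at the direction `(w, w)`. -/
def hessQF {d : ℕ} (f : Ed d → ℝ) (x w : Ed d) : ℝ :=
  fderiv ℝ (fun y => fderiv ℝ f y w) x w

/-- The (topological) support of a measure on `ℝ^d`. -/
def msupport {d : ℕ} (μ : Measure (Ed d)) : Set (Ed d) :=
  {x | ∀ U : Set (Ed d), IsOpen U → x ∈ U → μ U ≠ 0}

/-- The convolution `μ ⋆ ν` of two measures on `ℝ^d`: the law of `X + Y`
with `X ∼ μ`, `Y ∼ ν` independent. -/
def mconv {d : ℕ} (μ ν : Measure (Ed d)) : Measure (Ed d) :=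
  Measure.map (fun p : Ed d × Ed d => p.1 + p.2) (μ.prod ν)

/-- `μ` is `κ`-log-concave with density `p` w.r.t. Lebesgue measure: its support is
convex and `−∇² log p(x) ⪰ κ·Id` for `μ`-a.e. `x`. -/
def KLogConcaveD {d : ℕ} (κ : ℝ) (μ : Measure (Ed d)) (p : Ed d → ℝ) : Prop :=
  μ = (volume : Measure (Ed d)).withDensity (fun x => ENNReal.ofReal (p x)) ∧
    Convex ℝ (msupport μ) ∧
    ∀ᵐ x ∂μ, ∀ w : Ed d, hessQF (fun y => Real.log (p y)) x w ≤ -(κ * ‖w‖ ^ 2)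

/-- `μ` is `κ`-log-concave. -/
def KLogConcave {d : ℕ} (κ : ℝ) (μ : Measure (Ed d)) : Prop :=
  ∃ p : Ed d → ℝ, KLogConcaveD κ μ p

/-- `μ` is `β`-semi-log-convex with density `p` w.r.t. Lebesgue measure:
`−∇² log p(x) ⪯ β·Id` for every `x`. -/
def SemiLogConvexD {d : ℕ} (β : ℝ) (μ : Measure (Ed d)) (p : Ed d → ℝ) : Prop :=
  μ = (volume : Measure (Ed d)).withDensity (fun x => ENNReal.ofReal (p x)) ∧
    ∀ x w : Ed d, -(β * ‖w‖ ^ 2) ≤ hessQF (fun y => Real.log (p y)) x w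

/-- `μ` is `β`-semi-log-convex. -/
def SemiLogConvex {d : ℕ} (β : ℝ) (μ : Measure (Ed d)) : Prop :=
  ∃ p : Ed d → ℝ, SemiLogConvexD β μ p

/-- The Ornstein–Uhlenbeck semigroup:
`Q_t g(x) = ∫ g(e^{−t}x + √(1−e^{−2t})·y) dγ_d(y)`. -/
def OU {d : ℕ} (t : ℝ) (f : Ed d → ℝ) (x : Ed d) : ℝ :=
  ∫ y, f (Real.exp (-t) • x + Real.sqrt (1 - Real.exp (-2 * t)) • y) ∂(stdGaussian d)

/-- The heat semigroup: `P_t f(x) = ∫ f(x + √t·y) dγ_d(y)`. -/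
def heatSG {d : ℕ} (t : ℝ) (f : Ed d → ℝ) (x : Ed d) : ℝ :=
  ∫ y, f (x + Real.sqrt t • y) ∂(stdGaussian d)

/-- The entropy of `g` relative to `μ`:
`Ent_μ(g) = ∫ log(g)·g dμ − log(∫ g dμ)·∫ g dμ`. -/
def entRel {d : ℕ} (μ : Measure (Ed d)) (g : Ed d → ℝ) : ℝ :=
  ∫ x, Real.log (g x) * g x ∂μ - Real.log (∫ x, g x ∂μ) * ∫ x, g x ∂μ

/-- The variance of `g` under `μ`. -/
def varOf {d : ℕ} (μ : Measure (Ed d)) (g : Ed d → ℝ) : ℝ :=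
  ∫ x, g x ^ 2 ∂μ - (∫ x, g x ∂μ) ^ 2

/-- The distribution function of a density `p`: `F(λ) = Vol({x : p(x) ≥ λ})`. -/
def distFun {d : ℕ} (p : Ed d → ℝ) (l : ℝ) : ℝ≥0∞ :=
  (volume : Measure (Ed d)) {x | l ≤ p x}

/-- The density of the standard Gaussian measure w.r.t. Lebesgue measure. -/
def gaussPdf (d : ℕ) (x : Ed d) : ℝ :=
  (2 * π) ^ (-(d : ℝ) / 2) * Real.exp (-‖x‖ ^ 2 / 2)

/-- The `q`-Rényi entropy of a density `p`: `h_q = log(∫ p^q)/(1−q)`. -/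
def renyi {d : ℕ} (p : Ed d → ℝ) (q : ℝ) : ℝ :=
  Real.log (∫ x, p x ^ q ∂(volume : Measure (Ed d))) / (1 - q)



-- M n
def wpM (θ : ℝ) (n : ℕ) : ℝ := ∫ r in (0:ℝ)..1, r^(2*n) * exp (-θ*(1-r^2))

lemma wpM_rec (θ : ℝ) (n : ℕ) : (2*n+1) * wpM θ n = 1 - 2*θ * wpM θ (n+1) := by
  have h := intervalIntegral.integral_eq_sub_of_hasDerivAt (a := 0) (b := 1)
    (f := fun r : ℝ => r^(2*n+1) * exp (-θ*(1-r^2)))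
    (f' := fun r : ℝ => (2*n+1) * (r^(2*n) * exp (-θ*(1-r^2))) + 2*θ*(r^(2*(n+1)) * exp (-θ*(1-r^2))))
    (by
      intro x _
      have h1 : HasDerivAt (fun r : ℝ => r^(2*n+1)) (((2*n+1 : ℕ):ℝ) * x^(2*n)) x := by
        simpa using hasDerivAt_pow (2*n+1) x
      have h2 : HasDerivAt (fun r : ℝ => exp (-θ*(1-r^2))) (exp (-θ*(1-x^2)) * (-θ * (-(2*x)))) x := by
        have h3 : HasDerivAt (fun r : ℝ => -θ*(1-r^2)) (-θ * (-(2*x))) x := by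
          have := ((hasDerivAt_pow 2 x).const_sub 1).const_mul (-θ)
          simpa using this
        exact h3.exp
      refine (h1.fun_mul h2).congr_deriv ?_
      push_cast; ring)
    (by apply Continuous.intervalIntegrable; fun_prop)
  rw [intervalIntegral.integral_add (by apply Continuous.intervalIntegrable; fun_prop) (by apply Continuous.intervalIntegrable; fun_prop)] at h
  rw [intervalIntegral.integral_const_mul, intervalIntegral.integral_const_mul] at h
  simp at h
  unfold wpM
  simp only [neg_mul] at *
  linarith

lemma wp_cheb (θ x : ℝ) (c : ℝ) : 0 ≤ θ * ((x - c) * (exp (θ*x) - exp (θ*c))) := by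
  rcases le_total 0 (θ * (x-c)) with h | h
  · have : exp (θ*c) ≤ exp (θ*x) := exp_le_exp.2 (by linarith)
    nlinarith
  · have : exp (θ*x) ≤ exp (θ*c) := exp_le_exp.2 (by linarith)
    nlinarith

lemma wpM_J1a (θ : ℝ) : 0 ≤ θ * (7 * wpM θ 3 - 5 * wpM θ 2) := by
  have h : 0 ≤ ∫ r in (0:ℝ)..1, 7 * exp (-θ) * r^4 * (θ * ((r^2 - 5/7) * (exp (θ*r^2) - exp (θ*(5/7))))) := by
    apply intervalIntegral.integral_nonneg (by norm_num)
    intro r _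
    have := wp_cheb θ (r^2) (5/7)
    positivity
  have e : (fun r : ℝ => 7 * exp (-θ) * r^4 * (θ * ((r^2 - 5/7) * (exp (θ*r^2) - exp (θ*(5/7))))))
     = fun r => θ * 7 * (r^(2*3) * exp (-θ*(1-r^2))) - θ * 5 * (r^(2*2) * exp (-θ*(1-r^2))) - exp (-θ) * θ * exp (θ*(5/7)) * (7 * r^6 - 5 * r^4) := by
    funext r
    have : exp (-θ*(1-r^2)) = exp (-θ) * exp (θ*r^2) := by rw [← exp_add]; ring_nf
    rw [this]; ring
  rw [e, intervalIntegral.integral_sub (by apply Continuous.intervalIntegrable; fun_prop) (by apply Continuous.intervalIntegrable; fun_prop), intervalIntegral.integral_sub (by apply Continuous.intervalIntegrable; fun_prop) (by apply Continuous.intervalIntegrable; fun_prop)] at h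
  simp only [intervalIntegral.integral_const_mul] at h
  have e2 : ∫ r in (0:ℝ)..1, (7 * r^6 - 5 * r^4) = 0 := by
    rw [intervalIntegral.integral_sub (by apply Continuous.intervalIntegrable; fun_prop) (by apply Continuous.intervalIntegrable; fun_prop)]
    simp only [intervalIntegral.integral_const_mul, integral_pow]
    norm_num
  rw [e2] at h
  unfold wpM
  linarith

lemma wpM_J1 (θ : ℝ) (h : -3 < θ) : wpM θ 0 ≤ (105-40*θ+8*θ^2)/(105+30*θ) := by
  have a := wpM_J1a θ
  have r0 := wpM_rec θ 0
  have r1 := wpM_rec θ 1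
  have r2 := wpM_rec θ 2
  norm_num at r0 r1 r2
  have h2 : wpM θ 2 * (35 + 10 * θ) ≤ 7 := by nlinarith
  rw [le_div_iff₀ (by linarith)]
  have : wpM θ 0 = 1 - 2*θ/3 + 4*θ^2/3 * wpM θ 2 := by nlinarith
  rw [this]
  have := mul_le_mul_of_nonneg_left h2 (sq_nonneg θ)
  nlinarith

lemma wp_J2 (θ : ℝ) (h : 13/5 ≤ θ) : wpM θ 0 ≤ 1/(1+θ) := by
  -- ∫ (x-1/2) e^{θ x} ≥ 0
  have key : 0 ≤ wpM θ 1 - 1/2 * wpM θ 0 := by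
    set s := 2*(exp (θ/2) - 1) with hs
    have hs5 : 5 ≤ s := by
      have h1 : (1:ℝ) + 1.3 + 1.3^2/2 + 1.3^3/6 ≤ exp 1.3 := by
        have := Real.sum_le_exp_of_nonneg (x := 1.3) (by norm_num) 4
        simp [Finset.sum_range_succ, Nat.factorial] at this
        norm_num at this ⊢; linarith
      have h2 : exp 1.3 ≤ exp (θ/2) := exp_le_exp.2 (by linarith)
      norm_num at h1 
      linarith
    have pt : ∀ x ∈ Icc (0:ℝ) 1, 0 ≤ (x - 1/2) * (exp (θ*x) - (1 + s*x)) := by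
      intro x hx
      have cv : ∀ p q a b : ℝ, 0 ≤ a → 0 ≤ b → a + b = 1 → exp (a*p + b*q) ≤ a * exp p + b * exp q := fun p q a b ha hb hab => convexOn_exp.2 (mem_univ p) (mem_univ q) ha hb hab
      rcases le_total x (1/2) with hh | hh
      · have := cv 0 (θ/2) (1-2*x) (2*x) (by linarith) (by linarith [hx.1]) (by ring)
        simp at this
        rw [show 2*x*(θ/2) = θ*x by ring] at this
        have : exp (θ*x) ≤ 1 + s*x := by rw [hs]; linarith
        nlinarith
      · -- 1/2 = (1 - 1/(2x)) 0 + 1/(2x) x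
        have hx0 : 0 < x := by linarith
        have := cv 0 (θ*x) (1-1/(2*x)) (1/(2*x)) (by rw [sub_nonneg, div_le_one (by linarith)]; linarith) (by positivity) (by ring)
        simp only [smul_eq_mul, mul_zero, zero_add, exp_zero, mul_one] at this
        rw [show 1/(2*x)*(θ*x) = θ/2 by field_simp] at this
        have h3 : exp (θ/2) * (2*x) ≤ 2*x - 1 + exp (θ*x) := by
          have := mul_le_mul_of_nonneg_right this (by linarith : 0 ≤ 2*x)
          have e : (1 - 1/(2*x) + 1/(2*x)*exp (θ*x)) * (2*x) = 2*x - 1 + exp (θ*x) := by field_simp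
          linarith
        have : 1 + s*x ≤ exp (θ*x) := by rw [hs]; linarith
        nlinarith
    have h : 0 ≤ ∫ r in (0:ℝ)..1, exp (-θ) * ((r^2 - 1/2) * (exp (θ*r^2) - (1 + s*r^2))) := by
      apply intervalIntegral.integral_nonneg (by norm_num)
      intro r hr
      have := pt (r^2) ⟨by positivity, by nlinarith [hr.1, hr.2]⟩
      positivity
    have e : (fun r : ℝ => exp (-θ) * ((r^2 - 1/2) * (exp (θ*r^2) - (1 + s*r^2))))
     = fun r => (r^(2*1) * exp (-θ*(1-r^2))) - 1/2 * (r^(2*0) * exp (-θ*(1-r^2))) - exp (-θ) * (-(1/2) * r^0 + (1 - s/2) * r^2 + s * r^4) := by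
      funext r
      have : exp (-θ*(1-r^2)) = exp (-θ) * exp (θ*r^2) := by rw [← exp_add]; ring_nf
      rw [this]; ring
    rw [e, intervalIntegral.integral_sub (by apply Continuous.intervalIntegrable; fun_prop) (by apply Continuous.intervalIntegrable; fun_prop), intervalIntegral.integral_sub (by apply Continuous.intervalIntegrable; fun_prop) (by apply Continuous.intervalIntegrable; fun_prop)] at h
    simp only [intervalIntegral.integral_const_mul] at h
    have e2 : ∫ r in (0:ℝ)..1, (-(1/2) * r^0 + (1 - s/2) * r^2 + s * r^4) = -1/6 + s/30 := by
      rw [intervalIntegral.integral_add (by apply Continuous.intervalIntegrable; fun_prop) (by apply Continuous.intervalIntegrable; fun_prop), intervalIntegral.integral_add (by apply Continuous.intervalIntegrable; fun_prop) (by apply Continuous.intervalIntegrable; fun_prop)]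
      simp only [intervalIntegral.integral_const_mul, integral_pow]
      norm_num; ring
    rw [e2] at h
    have : 0 ≤ exp (-θ) * (-1/6 + s/30) := mul_nonneg (exp_pos _).le (by linarith)
    unfold wpM
    linarith
  have r0 := wpM_rec θ 0
  norm_num at r0
  rw [le_div_iff₀ (by linarith)]
  nlinarith


lemma wp_poly1 (d θ : ℝ) (hd : 2 ≤ d) (h1 : -3/2 ≤ θ) (h2 : θ ≤ 13/5) :
    (d-1)*(3*d*(d+5)+2*(d+3)^2*(d+5)*θ+3*d*(d+3)^2+9*(d+5))*(105-40*θ+8*θ^2)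
      ≤ 3*d^2*(d^2+7*d+15)*(105+30*θ) := by
  obtain ⟨e, rfl⟩ : ∃ e, d = e + 2 := ⟨d-2, by ring⟩
  have he : 0 ≤ e := by linarith
  have p0 : 8000 ≤ 14805 -14670*θ + 11960*θ^2 -2800*θ^3 := by
    nlinarith [mul_nonneg (sub_nonneg.2 h2) (sq_nonneg (θ-0.9)), mul_nonneg (sub_nonneg.2 h2) (sq_nonneg (θ-1.2)), sq_nonneg (θ-1)]
  have p1 : -4400 ≤ 10710 -23820*θ + 18192*θ^2 -4320*θ^3 := by
    nlinarith [mul_nonneg (sub_nonneg.2 h2) (sq_nonneg (θ-0.9)), mul_nonneg (sub_nonneg.2 h2) (sq_nonneg (θ-1.2)), sq_nonneg (θ-1)]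
  have p2 : 700 ≤ 3465 -7830*θ + 7280*θ^2 -1792*θ^3 := by
    nlinarith [mul_nonneg (sub_nonneg.2 h2) (sq_nonneg (θ-0.9)), mul_nonneg (sub_nonneg.2 h2) (sq_nonneg (θ-0.7)), sq_nonneg (θ-1)]
  have p3 : 0 ≤ 315 -750*θ + 1104*θ^2 -288*θ^3 := by
    nlinarith [mul_nonneg (sub_nonneg.2 h2) (sq_nonneg (θ-0.4)), mul_nonneg (sub_nonneg.2 h2) (sq_nonneg (θ)), sq_nonneg (θ-1), sq_nonneg (θ-0.4)]
  have p4 : 0 ≤ 56*θ^2 -16*θ^3 := by nlinarith [mul_nonneg (sub_nonneg.2 h2) (sq_nonneg (θ)), sq_nonneg θ]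
  have q1 := mul_le_mul_of_nonneg_left p1 he
  have q2 := mul_le_mul_of_nonneg_left p2 (pow_nonneg he 2)
  have q3 := mul_nonneg (pow_nonneg he 3) p3
  have q4 := mul_nonneg (pow_nonneg he 4) p4
  nlinarith [sq_nonneg (e - 3)]

lemma wp_poly2 (d θ : ℝ) (hd : 2 ≤ d) (h2 : 13/5 ≤ θ) :
    (d-1)*(3*d*(d+5)+2*(d+3)^2*(d+5)*θ+3*d*(d+3)^2+9*(d+5))
      ≤ 3*d^2*(d^2+7*d+15)*(1+θ) := by
  obtain ⟨e, rfl⟩ : ∃ e, d = e + 2 := ⟨d-2, by ring⟩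
  obtain ⟨s, rfl⟩ : ∃ s, θ = s + 13/5 := ⟨θ-13/5, by ring⟩
  have he : 0 ≤ e := by linarith
  have hs : 0 ≤ s := by linarith
  rw [← sub_nonneg]
  have k : 0 ≤ 2.6*e^4 + 26.4*e^3+82.4*e^2+70.8*e+260.6 := by positivity
  have k2 : 0 ≤ s*(e^4+9*e^3+10*e^2+(3*e-2)^2+42) := by positivity
  norm_num at k
  nlinarith

lemma wp_log_bd (x : ℝ) (hx : 1 ≤ x) : log x ≤ (x - x⁻¹)/2 := by
  have h := Real.self_le_sinh_iff.2 (Real.log_nonneg hx)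
  rwa [Real.sinh_eq, exp_neg, exp_log (by linarith)] at h

lemma wp_scalar (d : ℝ) (hd : 2 ≤ d) (A : ℝ) (hA : 0 ≤ A) (α : ℝ) (hα : α = 3/(d+3)) :
    ∫ r in (0:ℝ)..1, exp (d/2 * log (1 + α*(1-r^2)) + α*(1-r^2)/2*(α-(1-α)*A))
      ≤ d*(d+3)/(d-1)/(1+A) := by
  have hα0 : 0 < α := by rw [hα]; positivity
  set θ := (3/(2*(d+3)))*(d*A/(d+3)-d*(d+3)/(d+5)-3/(d+3)) with hθ
  set K := (d+3)*(d+5)/(d^2+7*d+15) with hK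
  have hK0 : 0 < K := by positivity
  have hθA : 1 + A = (3*d*(d+5)+2*(d+3)^2*(d+5)*θ+3*d*(d+3)^2+9*(d+5))/(3*d*(d+5)) := by
    rw [hθ]; field_simp; ring
  have hθ1 : -3/2 ≤ θ := by
    have h1 : θ = (3/(2*(d+3)))*(d*A/(d+3)) - 3/2 + 3/2*(5/(d+5) - 3/(d+3)^2) := by
      rw [hθ]; field_simp; ring
    have h2 : 3/(d+3)^2 ≤ 5/(d+5) := by
      rw [div_le_div_iff₀ (by positivity) (by positivity)]; nlinarith
    have h3 : 0 ≤ (3/(2*(d+3)))*(d*A/(d+3)) := by positivity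
    linarith
  have step1 : ∫ r in (0:ℝ)..1, exp (d/2 * log (1 + α*(1-r^2)) + α*(1-r^2)/2*(α-(1-α)*A))
      ≤ K * wpM θ 0 := by
    unfold wpM
    rw [← intervalIntegral.integral_const_mul]
    apply intervalIntegral.integral_mono_on (by norm_num)
    · apply ContinuousOn.intervalIntegrable
      apply ContinuousOn.rexp
      apply ContinuousOn.add
      · apply ContinuousOn.mul (by fun_prop)
        apply ContinuousOn.log (by fun_prop)
        intro x hx
        rw [uIcc_of_le (by norm_num)] at hx
        have : 0 ≤ 1 - x^2 := by nlinarith [hx.1, hx.2]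
        positivity
      · fun_prop
    · apply Continuous.intervalIntegrable; fun_prop
    · intro r hr
      have hs0 : 0 ≤ 1 - r^2 := by nlinarith [hr.1, hr.2]
      set σ := 1 - r^2 with hσ
      have e1 : exp (d/((d+3)*(d+5))) ≤ K := by
        have h := Real.add_one_le_exp (-(d/((d+3)*(d+5))))
        rw [exp_neg] at h
        have h2 : -(d/((d+3)*(d+5))) + 1 = K⁻¹ := by
          rw [hK]; field_simp; ring
        rw [h2] at h
        exact (inv_le_inv₀ hK0 (exp_pos _)).1 h
      have e2 : d/2 * log (1 + α*σ) + α*σ/2*(α-(1-α)*A) ≤ d/((d+3)*(d+5)) + (-θ*σ) := by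
        have t1 : log (1+α*σ) ≤ log ((d+5)/(d+3)) + (α*(σ-2/3))*((d+3)/(d+5)) := by
          have := Real.log_le_sub_one_of_pos (x := (1+α*σ) / ((d+5)/(d+3))) (by positivity)
          rw [Real.log_div (by positivity) (by positivity)] at this
          have e : (1+α*σ) / ((d+5)/(d+3)) - 1 = (α*(σ-2/3))*((d+3)/(d+5)) := by
            rw [hα]; field_simp; ring
          linarith
        have t2 := wp_log_bd ((d+5)/(d+3)) (by rw [le_div_iff₀ (by positivity)]; linarith)
        have t3 : d/2 * log (1+α*σ) ≤ d/2 * ((((d+5)/(d+3)) - ((d+5)/(d+3))⁻¹)/2 + (α*(σ-2/3))*((d+3)/(d+5))) := by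
          apply mul_le_mul_of_nonneg_left _ (by positivity)
          linarith
        refine (add_le_add_left t3 _).trans (le_of_eq ?_)
        rw [hθ, hα]; field_simp; ring
      calc exp (d/2 * log (1 + α*σ) + α*σ/2*(α-(1-α)*A)) ≤ exp (d/((d+3)*(d+5)) + (-θ*σ)) := exp_le_exp.2 e2
        _ = exp (d/((d+3)*(d+5))) * exp (-θ*σ) := exp_add _ _
        _ ≤ K * exp (-θ*σ) := mul_le_mul_of_nonneg_right e1 (exp_pos _).le
        _ = _ := by simp
  refine step1.trans ?_
  rw [le_div_iff₀ (by linarith), hθA]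
  have hd1 : 0 < d - 1 := by linarith
  have hbr : 0 < (3*d*(d+5)+2*(d+3)^2*(d+5)*θ+3*d*(d+3)^2+9*(d+5)) := by
    have : 0 < (1+A) * (3*d*(d+5)) := by positivity
    rw [hθA] at this; rwa [div_mul_cancel₀ _ (by positivity)] at this
  rcases le_total θ (13/5) with h | h
  · have hj := wpM_J1 θ (by linarith)
    have hp := wp_poly1 d θ hd hθ1 h
    set b := (3*d*(d+5)+2*(d+3)^2*(d+5)*θ+3*d*(d+3)^2+9*(d+5)) with hb
    have h105 : 0 < 105+30*θ := by linarith
    calc K * wpM θ 0 * (b/(3*d*(d+5))) ≤ K * ((105-40*θ+8*θ^2)/(105+30*θ)) * (b/(3*d*(d+5))) := by gcongr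
      _ = (d+3) * ((d-1)*b*(105-40*θ+8*θ^2)) / ((d^2+7*d+15)*(105+30*θ)*(3*d)*(d-1)) := by
        rw [hK]; field_simp
      _ ≤ (d+3) * (3*d^2*(d^2+7*d+15)*(105+30*θ)) / ((d^2+7*d+15)*(105+30*θ)*(3*d)*(d-1)) := by gcongr
      _ = d*(d+3)/(d-1) := by field_simp
  · have hj := wp_J2 θ h
    have hp := wp_poly2 d θ hd h
    set b := (3*d*(d+5)+2*(d+3)^2*(d+5)*θ+3*d*(d+3)^2+9*(d+5)) with hb
    have h105 : 0 < 1+θ := by linarith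
    calc K * wpM θ 0 * (b/(3*d*(d+5))) ≤ K * (1/(1+θ)) * (b/(3*d*(d+5))) := by gcongr
      _ = (d+3) * ((d-1)*b) / ((d^2+7*d+15)*(1+θ)*(3*d)*(d-1)) := by
        rw [hK]; field_simp
      _ ≤ (d+3) * (3*d^2*(d^2+7*d+15)*(1+θ)) / ((d^2+7*d+15)*(1+θ)*(3*d)*(d-1)) := by gcongr
      _ = d*(d+3)/(d-1) := by field_simp


lemma wp_real_gauss {d : ℕ} (b : ℝ) (hb : 0 < b) (w : Ed d) :
    Integrable (fun v : Ed d => exp (-b*‖v‖^2 + inner ℝ w v)) ∧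
    ∫ v : Ed d, exp (-b*‖v‖^2 + inner ℝ w v) = (π/b)^((d:ℝ)/2) * exp (‖w‖^2/(4*b)) := by
  have e : ∀ v : Ed d, ((exp (-b*‖v‖^2 + inner ℝ w v) : ℝ) : ℂ) = Complex.exp (-(b:ℂ)*‖v‖^2 + (1:ℂ) * (inner ℝ w v : ℝ)) := by
    intro v; push_cast; ring_nf
  constructor
  · have := GaussianFourier.integrable_cexp_neg_mul_sq_norm_add (V := Ed d) (b := (b:ℂ)) (by simpa using hb) 1 w
    simp_rw [← e] at this
    exact this.re
  · have := GaussianFourier.integral_cexp_neg_mul_sq_norm_add (V := Ed d) (b := (b:ℂ)) (by simpa using hb) 1 w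
    simp_rw [← e] at this
    have h0 := (integral_ofReal (𝕜 := ℂ) (μ := volume) (f := fun v : Ed d => exp (-b*‖v‖^2 + inner ℝ w v)))
    have this := h0.symm.trans this
    have h2 : (((π/b)^((d:ℝ)/2) * exp (‖w‖^2/(4*b)) : ℝ) : ℂ) = ((π:ℂ)/b)^((Module.finrank ℝ (Ed d) : ℂ)/2) * Complex.exp (1^2*‖w‖^2/(4*b)) := by
      rw [Complex.ofReal_mul, Complex.ofReal_cpow (by positivity)]
      push_cast
      simp
    rw [← h2] at this
    exact Complex.ofReal_injective this

lemma wp_pdf_pos {d : ℕ} (x : Ed d) : 0 < gaussPdf d x := by unfold gaussPdf; positivity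

lemma wp_pdf_cont {d : ℕ} : Continuous (gaussPdf d) := by unfold gaussPdf; fun_prop

lemma wp_std_eq (d : ℕ) : stdGaussian d = (volume : Measure (Ed d)).withDensity (fun x => ENNReal.ofReal (gaussPdf d x)) := rfl

lemma wp_std_lint (d : ℕ) : (∫⁻ x : Ed d, ENNReal.ofReal (gaussPdf d x)) = 1 := by
  have h := wp_real_gauss (d := d) (1/2) (by norm_num) 0
  have e : ∀ v : Ed d, gaussPdf d v = (2*π)^(-(d:ℝ)/2) * exp (-(1/2)*‖v‖^2 + inner ℝ 0 v) := by
    intro v; unfold gaussPdf; rw [inner_zero_left]; congr 2; ring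
  rw [← ofReal_integral_eq_lintegral_ofReal]
  · have e' : gaussPdf d = _ := funext e
    rw [e', integral_const_mul, h.2]
    rw [show π/(1/2) = π * 2 by ring]
    rw [mul_comm π 2, ← mul_assoc, ← rpow_add (by positivity)]
    rw [show -(d:ℝ)/2 + d/2 = 0 by ring]
    simp
  · have e' : gaussPdf d = _ := funext e
    rw [e']
    exact h.1.const_mul _
  · exact Filter.Eventually.of_forall fun x => (wp_pdf_pos x).le

instance wp_std_prob (d : ℕ) : IsProbabilityMeasure (stdGaussian d) := by
  constructor
  rw [wp_std_eq, withDensity_apply _ MeasurableSet.univ]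
  simpa using wp_std_lint d

lemma wp_int_std {d : ℕ} {E : Type*} [NormedAddCommGroup E] [NormedSpace ℝ E] (F : Ed d → E) :
    ∫ x, F x ∂(stdGaussian d) = ∫ x, gaussPdf d x • F x := by
  rw [wp_std_eq, integral_withDensity_eq_integral_toReal_smul]
  · congr 1; funext x; rw [ENNReal.toReal_ofReal (wp_pdf_pos x).le]
  · exact (wp_pdf_cont.measurable).ennreal_ofReal
  · exact Filter.Eventually.of_forall fun x => ENNReal.ofReal_lt_top

lemma wp_integrable_std {d : ℕ} {E : Type*} [NormedAddCommGroup E] [NormedSpace ℝ E] (F : Ed d → E) :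
    Integrable F (stdGaussian d) ↔ Integrable (fun x => gaussPdf d x • F x) := by
  rw [wp_std_eq, integrable_withDensity_iff_integrable_smul']
  · apply integrable_congr
    exact Filter.Eventually.of_forall fun x => by simp only [ENNReal.toReal_ofReal (wp_pdf_pos x).le]
  · exact (wp_pdf_cont.measurable).ennreal_ofReal
  · exact Filter.Eventually.of_forall fun x => ENNReal.ofReal_lt_top

lemma wp_std_exp {d : ℕ} (b : ℝ) (hb : b < 1) (w : Ed d) :
    Integrable (fun v : Ed d => exp (b/2*‖v‖^2 + inner ℝ w v)) (stdGaussian d) ∧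
    ∫ v : Ed d, exp (b/2*‖v‖^2 + inner ℝ w v) ∂(stdGaussian d) = (1-b)^(-(d:ℝ)/2) * exp (‖w‖^2/(2*(1-b))) := by
  have h := wp_real_gauss (d := d) ((1-b)/2) (by linarith) w
  have e : ∀ v : Ed d, gaussPdf d v • exp (b/2*‖v‖^2 + inner ℝ w v) = (2*π)^(-(d:ℝ)/2) * exp (-((1-b)/2)*‖v‖^2 + inner ℝ w v) := by
    intro v; unfold gaussPdf; rw [smul_eq_mul, mul_assoc, ← exp_add]; ring_nf
  constructor
  · rw [wp_integrable_std]
    simp_rw [e]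
    exact h.1.const_mul _
  · rw [wp_int_std]
    simp_rw [e]
    have h1 : 0 < 1 - b := by linarith
    rw [integral_const_mul, h.2, ← mul_assoc]
    congr 1
    · rw [show π/((1-b)/2) = (2*π)*(1-b)⁻¹ by field_simp, mul_rpow (x := 2*π) (by positivity) (by positivity), ← mul_assoc, ← rpow_add (by positivity), inv_rpow h1.le, ← rpow_neg h1.le]
      ring_nf; simp
    · congr 1; ring

lemma wp_std_eq_mathlib (d : ℕ) : stdGaussian d = ProbabilityTheory.stdGaussian (Ed d) := by
  apply Measure.ext_of_charFun
  funext t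
  rw [ProbabilityTheory.charFun_stdGaussian, charFun_apply, wp_int_std]
  have := GaussianFourier.integral_cexp_neg_mul_sq_norm_add (V := Ed d) (b := ((1/2:ℝ):ℂ)) (by rw [Complex.ofReal_re]; norm_num) Complex.I t
  have e : ∀ x : Ed d, gaussPdf d x • Complex.exp (inner ℝ x t * Complex.I) = (((2*π)^(-(d:ℝ)/2) : ℝ) : ℂ) * Complex.exp (-((1/2:ℝ):ℂ)*‖x‖^2 + Complex.I * (inner ℝ t x : ℝ)) := by
    intro x
    unfold gaussPdf
    rw [Complex.real_smul, Complex.ofReal_mul, Complex.ofReal_exp, mul_assoc, ← Complex.exp_add, real_inner_comm]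
    push_cast; ring_nf
  simp_rw [e]
  rw [integral_const_mul, this, ← mul_assoc]
  have h2 : (((2*π)^(-(d:ℝ)/2) : ℝ) : ℂ) * ((π:ℂ)/((1/2:ℝ):ℂ))^((Module.finrank ℝ (Ed d) : ℂ)/2) = 1 := by
    have : ((π:ℂ)/((1/2:ℝ):ℂ))^((Module.finrank ℝ (Ed d) : ℂ)/2) = (((2*π)^((d:ℝ)/2) : ℝ):ℂ) := by
      rw [Complex.ofReal_cpow (by positivity)]; push_cast; simp; ring_nf
    rw [this, ← Complex.ofReal_mul, ← rpow_add (by positivity)]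
    ring_nf; simp
  rw [h2, one_mul]
  congr 1
  simp; ring

instance wp_std_gauss (d : ℕ) : ProbabilityTheory.IsGaussian (stdGaussian d) := by
  rw [wp_std_eq_mathlib]; infer_instance

lemma wp_std_mean (d : ℕ) : ∫ x, id x ∂(stdGaussian d) = 0 := by
  rw [wp_std_eq_mathlib]; exact ProbabilityTheory.integral_id_stdGaussian

lemma wp_std_rot (d : ℕ) (θ : ℝ) : ((stdGaussian d).prod (stdGaussian d)).map (ContinuousLinearMap.rotation θ) = (stdGaussian d).prod (stdGaussian d) :=
  ProbabilityTheory.IsGaussian.map_rotation_eq_self (wp_std_mean d) θ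

lemma wp_std_neg (d : ℕ) : (stdGaussian d).map (fun x => -x) = stdGaussian d := by
  apply Measure.ext_of_charFun
  funext t
  rw [wp_std_eq_mathlib]
  have : (fun x : Ed d => -x) = fun x => (-1:ℝ) • x := by funext x; simp
  rw [this, charFun_map_smul]
  rw [ProbabilityTheory.charFun_stdGaussian, ProbabilityTheory.charFun_stdGaussian]
  simp

lemma wp_norm_int (d : ℕ) : Integrable (fun x : Ed d => ‖x‖) (stdGaussian d) :=
  (ProbabilityTheory.IsGaussian.integrable_id (μ := stdGaussian d)).norm


lemma wp_F_scalar (d : ℝ) (hd : 2 ≤ d) (α q M B A ρ σ a P Q : ℝ) (hα0 : 0 < α) (hα1 : α ≤ 1)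
    (hσ0 : 0 ≤ σ) (hσ : σ = 1 - ρ^2) (hB : 0 ≤ B) (hA : 0 ≤ A) (hq : q = exp (-B)) (hM : M = α*σ)
    (ha : a = q*α/(1+q*M)) (hP : P = Q - σ*(A-B)) (hQ : Q ≤ (A+ρ^2)*(1+B)) (hQ0 : 0 ≤ Q) :
    d/2 * log (1+q*M) + (q*α*P - a*Q)/2 ≤ d/2 * log (1+M) + M/2*(α-(1-α)*(q*A)) := by
  have hq0 : 0 < q := by rw [hq]; exact exp_pos _
  have hq1 : q * (1+B) ≤ 1 := by
    have h := Real.add_one_le_exp B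
    have : q * exp B = 1 := by rw [hq, ← exp_add]; simp
    nlinarith
  have hσ1 : σ ≤ 1 := by nlinarith [sq_nonneg ρ]
  have hρ1 : ρ^2 ≤ 1 := by linarith
  have hM0 : 0 ≤ M := by rw [hM]; positivity
  have hM1 : M ≤ 1 := by rw [hM]; nlinarith
  have hq2 : q ≤ 1 := by nlinarith
  have h1 : q*α - a ≤ q^2*α*M := by
    rw [ha, sub_le_iff_le_add, ← sub_le_iff_le_add', le_div_iff₀ (by positivity)]
    have : 0 ≤ q*α*(q*M)^2 := by positivity
    nlinarith
  have h2 : q*α*P - a*Q ≤ q*M*(B+α*ρ^2-(1-α)*A) := by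
    have e : q*α*P - a*Q = (q*α-a)*Q - q*M*(A-B) := by rw [hP, hM]; ring
    have e2 : (q*α-a)*Q ≤ q*α*M*(A+ρ^2) := by
      calc (q*α-a)*Q ≤ q^2*α*M*Q := by gcongr
        _ ≤ q^2*α*M*((A+ρ^2)*(1+B)) := by gcongr
        _ = q*α*M*(A+ρ^2) * (q*(1+B)) := by ring
        _ ≤ q*α*M*(A+ρ^2) * 1 := by gcongr
        _ = _ := by ring
    rw [e]; nlinarith
  have h3 : log (1+q*M) - log (1+M) ≤ -((1-q)*M/2) := by
    rw [← Real.log_div (by positivity) (by positivity)]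
    refine (Real.log_le_sub_one_of_pos (by positivity)).trans ?_
    rw [sub_le_iff_le_add, div_le_iff₀ (by positivity)]
    have : 0 ≤ (1-q)*M*(1-M) := by apply mul_nonneg (mul_nonneg _ hM0) <;> linarith
    nlinarith
  have h4 : d/2 * (log (1+q*M) - log (1+M)) ≤ -((1-q)*M/2) := by
    have : 0 ≤ (1-q)*M/2 := by apply div_nonneg (mul_nonneg _ hM0) <;> linarith
    nlinarith
  have h5 : q*B*M ≤ (1-q)*M := by gcongr; linarith
  have h6 : q*(M*α*ρ^2) ≤ 1*(M*α*1) := by gcongr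
  nlinarith

def wpα (d : ℕ) : ℝ := 3/((d:ℝ)+3)
def wpa (d : ℕ) (y : Ed d) (σ : ℝ) : ℝ := exp (-‖y‖^2) * wpα d/(1+exp (-‖y‖^2)*(wpα d*σ))
def wph (d : ℕ) (y : Ed d) (ρ : ℝ) (z : Ed d) : ℝ := wpa d y (1-ρ^2)/2 * ‖z + (1+ρ)•y‖^2
def wpG (d : ℕ) (y : Ed d) (ρ : ℝ) (u : Ed d) : ℝ :=
  exp ((d:ℝ)/2 * log (1+wpα d*(1-ρ^2)) + wpα d*(1-ρ^2)/2*(wpα d-(1-wpα d)*(exp (-‖y‖^2)*‖u+y‖^2)))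

lemma wpα_pos (d : ℕ) : 0 < wpα d := by unfold wpα; positivity
lemma wpα_le (d : ℕ) : wpα d ≤ 1 := by unfold wpα; rw [div_le_one (by positivity)]; linarith [Nat.cast_nonneg (α := ℝ) d]

lemma wp_F {d : ℕ} (hd : 2 ≤ d) (u y : Ed d) (ρ s : ℝ) (hρ0 : 0 ≤ ρ) (hs : ρ^2 + s^2 = 1) :
    Integrable (fun v => exp (wph d y ρ (ρ•u+s•v) - wph d y ρ u)) (stdGaussian d) ∧
    ∫ v, exp (wph d y ρ (ρ•u+s•v) - wph d y ρ u) ∂(stdGaussian d) ≤ wpG d y ρ u := by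
  set q := exp (-‖y‖^2) with hq
  have hq0 : 0 < q := exp_pos _
  have hq1 : q ≤ 1 := by rw [hq]; simp
  set α := wpα d with hα
  have hα0 : 0 < α := wpα_pos d
  have hα1 : α ≤ 1 := wpα_le d
  have hσ0 : 0 ≤ 1 - ρ^2 := by nlinarith [sq_nonneg s]
  set σ := 1 - ρ^2 with hσ
  have hsσ : s^2 = σ := by rw [hσ]; linarith
  set a := wpa d y σ with ha
  have ha' : a = q*α/(1+q*(α*σ)) := rfl
  set p := ρ•u + (1+ρ)•y with hp
  have haσ : a*σ = 1 - 1/(1+q*(α*σ)) := by rw [ha']; field_simp; ring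
  have haσ1 : a*σ < 1 := by rw [haσ]; have : 0 < 1/(1+q*(α*σ)) := by positivity
                            linarith
  have key := wp_std_exp (d := d) (a*σ) haσ1 ((a*s)•p)
  have e : ∀ v, exp (wph d y ρ (ρ•u+s•v) - wph d y ρ u) = exp (a/2*‖p‖^2 - wph d y ρ u) * exp (a*σ/2*‖v‖^2 + inner ℝ ((a*s)•p) v) := by
    intro v
    rw [← exp_add]
    congr 1
    have : wph d y ρ (ρ•u+s•v) = a/2*‖p + s•v‖^2 := by
      unfold wph; rw [hp]; congr 3; module
    rw [this, norm_add_sq_real, norm_smul, mul_pow, inner_smul_left, inner_smul_right, ← hsσ]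
    simp; ring
  simp_rw [e]
  refine ⟨key.1.const_mul _, ?_⟩
  rw [integral_const_mul, key.2]
  have e2 : (1-a*σ)^(-(d:ℝ)/2) = exp ((d:ℝ)/2 * log (1+q*(α*σ))) := by
    rw [haσ, show 1 - (1 - 1/(1+q*(α*σ))) = (1+q*(α*σ))⁻¹ by ring]
    have h1 : 0 < 1+q*(α*σ) := by positivity
    rw [rpow_def_of_pos (by positivity), log_inv]; ring_nf
  rw [e2, ← exp_add, ← exp_add]
  unfold wpG
  apply exp_le_exp.2
  have := wp_F_scalar d (by exact_mod_cast hd) α q (α*σ) (‖y‖^2) (‖u+y‖^2) ρ σ a (‖p‖^2) (‖u+(1+ρ)•y‖^2) hα0 hα1 hσ0 hσ (by positivity) (by positivity) hq rfl ha' ?_ ?_ (by positivity)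
  · refine le_trans (le_of_eq ?_) this
    have e3 : ‖(a*s)•p‖^2/(2*(1-a*σ)) + a/2*‖p‖^2 = q*α*‖p‖^2/2 := by
      rw [norm_smul, mul_pow, Real.norm_eq_abs, sq_abs, mul_pow, hsσ]
      have h1 : 1 - a*σ = 1/(1+q*(α*σ)) := by rw [haσ]; ring
      have h2 : a*(1+q*(α*σ)) = q*α := by rw [ha']; field_simp
      have h3 : a^2*σ*‖p‖^2/(2*(1-a*σ)) = a*(a*(1+q*(α*σ)))*σ*‖p‖^2/2 := by rw [h1]; field_simp
      rw [h3, h2]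
      have h4 : a + a*(q*α)*σ = q*α := by linear_combination h2
      linear_combination ‖p‖^2/2 * h4
    have e4 : wph d y ρ u = a/2*‖u+(1+ρ)•y‖^2 := rfl
    rw [e4]
    linarith
  · have e1 : p = ρ•(u+y) + y := by rw [hp]; module
    have e2 : u+(1+ρ)•y = (u+y) + ρ•y := by module
    rw [e1, e2, norm_add_sq_real, norm_add_sq_real, norm_smul, norm_smul, inner_smul_left, inner_smul_right]
    simp [mul_pow]
    rw [hσ]; ring
  · have e2 : u+(1+ρ)•y = (u+y) + ρ•y := by module
    have h1 : ‖u+(1+ρ)•y‖ ≤ ‖u+y‖ + ρ*‖y‖ := by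
      rw [e2]; refine (norm_add_le _ _).trans ?_
      rw [norm_smul, Real.norm_eq_abs, abs_of_nonneg hρ0]
    have h2 : ‖u+(1+ρ)•y‖^2 ≤ (‖u+y‖ + ρ*‖y‖)^2 := by gcongr
    nlinarith [sq_nonneg (‖u+y‖*‖y‖ - ρ)]


lemma wp_refl (d : ℕ) (θ : ℝ) : MeasurePreserving
    (fun p : Ed d × Ed d => (cos θ • p.1 + sin θ • p.2, sin θ • p.1 - cos θ • p.2))
    ((stdGaussian d).prod (stdGaussian d)) ((stdGaussian d).prod (stdGaussian d)) := by
  have h1 : MeasurePreserving (ContinuousLinearMap.rotation θ : Ed d × Ed d → Ed d × Ed d)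
    ((stdGaussian d).prod (stdGaussian d)) ((stdGaussian d).prod (stdGaussian d)) :=
    ⟨(ContinuousLinearMap.rotation θ : Ed d × Ed d →L[ℝ] Ed d × Ed d).continuous.measurable, wp_std_rot d θ⟩
  have h2 : MeasurePreserving (fun x : Ed d => -x) (stdGaussian d) (stdGaussian d) := ⟨measurable_neg, wp_std_neg d⟩
  have h3 := ((MeasurePreserving.id (stdGaussian d)).prod h2).comp h1
  convert h3 using 1
  funext p
  simp [ContinuousLinearMap.rotation_apply]
  abel

lemma wp_rot (d : ℕ) (θ : ℝ) : MeasurePreserving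
    (fun p : Ed d × Ed d => (cos θ • p.1 + sin θ • p.2, -sin θ • p.1 + cos θ • p.2))
    ((stdGaussian d).prod (stdGaussian d)) ((stdGaussian d).prod (stdGaussian d)) := by
  have h1 : MeasurePreserving (ContinuousLinearMap.rotation θ : Ed d × Ed d → Ed d × Ed d)
    ((stdGaussian d).prod (stdGaussian d)) ((stdGaussian d).prod (stdGaussian d)) :=
    ⟨(ContinuousLinearMap.rotation θ : Ed d × Ed d →L[ℝ] Ed d × Ed d).continuous.measurable, wp_std_rot d θ⟩
  convert h1 using 1
  funext p
  simp [ContinuousLinearMap.rotation_apply]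

lemma wp_int_cont {X E : Type*} [TopologicalSpace X] [MeasurableSpace X] [OpensMeasurableSpace X]
    [NormedAddCommGroup E] [SecondCountableTopologyEither X E]
    (μ : Measure X) [IsFiniteMeasure μ] (F : X → E) (hF : Continuous F) (C : ℝ) (hC : ∀ x, ‖F x‖ ≤ C) : Integrable F μ :=
  Integrable.of_bound hF.aestronglyMeasurable C (Filter.Eventually.of_forall hC)

lemma wp_int_cc {d : ℕ} (μ : Measure (Ed d)) [IsFiniteMeasure μ] (F : Ed d → ℝ) (hF : Continuous F) (hc : HasCompactSupport F) : Integrable F μ := by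
  exact hF.integrable_of_hasCompactSupport hc

lemma wph_cont {d : ℕ} (y : Ed d) (ρ : ℝ) : Continuous (wph d y ρ) := by unfold wph; fun_prop
lemma wpG_cont {d : ℕ} (y : Ed d) (ρ : ℝ) : Continuous (wpG d y ρ) := by unfold wpG; fun_prop

lemma wp_amgm_gen {d : ℕ} (γ : Measure (Ed d)) [IsProbabilityMeasure γ] (G : Ed d → Ed d) (hG : Continuous G) (hGc : HasCompactSupport G) (θ : ℝ)
    (hT : MeasurePreserving
    (fun p : Ed d × Ed d => (cos θ • p.1 + sin θ • p.2, sin θ • p.1 - cos θ • p.2)) (γ.prod γ) (γ.prod γ))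
    (h Φ : Ed d → ℝ) (hhc : Continuous h) (hΦ : Continuous Φ)
    (hF : ∀ u, Integrable (fun v => exp (h (cos θ • u + sin θ • v) - h u)) γ ∧
      ∫ v, exp (h (cos θ • u + sin θ • v) - h u) ∂γ ≤ Φ u) :
    ∫ p, inner ℝ (G p.1) (G (cos θ • p.1 + sin θ • p.2)) ∂(γ.prod γ) ≤
    ∫ u, ‖G u‖^2 * Φ u ∂γ := by
  obtain ⟨M, hM⟩ := hGc.exists_bound_of_continuous hG
  set W : Ed d × Ed d → ℝ := fun p => ‖G p.1‖^2 * exp (h (cos θ • p.1 + sin θ • p.2) - h p.1) with hW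
  have hWc : Continuous W := by fun_prop
  have hR : Integrable (fun u => ‖G u‖^2 * Φ u) γ := by
    apply wp_int_cc
    · fun_prop
    · apply HasCompactSupport.mul_right
      exact hGc.norm.comp_left (g := fun x : ℝ => x^2) (by simp)
  have hinner : ∀ u, ∫ v, W (u, v) ∂γ = ‖G u‖^2 * ∫ v, exp (h (cos θ • u + sin θ • v) - h u) ∂γ := by
    intro u; simp only [hW]; rw [integral_const_mul]
  have hWi : Integrable W (γ.prod γ) := by
    rw [integrable_prod_iff hWc.aestronglyMeasurable]
    refine ⟨Filter.Eventually.of_forall fun u => by simp only [hW]; exact (hF u).1.const_mul _, ?_⟩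
    refine hR.mono' ?_ ?_
    · exact (hWc.norm.aestronglyMeasurable (μ := γ.prod γ)).integral_prod_right'
    · refine Filter.Eventually.of_forall fun u => ?_
      have e : ∀ v, ‖W (u,v)‖ = W (u, v) := fun v => by
        rw [Real.norm_eq_abs, abs_of_nonneg]; simp only [hW]; positivity
      simp_rw [e]
      rw [Real.norm_eq_abs, abs_of_nonneg (integral_nonneg fun v => by simp only [hW, Pi.zero_apply]; positivity), hinner]
      exact mul_le_mul_of_nonneg_left (hF u).2 (by positivity)
  set T := (fun p : Ed d × Ed d => (cos θ • p.1 + sin θ • p.2, sin θ • p.1 - cos θ • p.2)) with hTd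
  have hTc : Continuous T := by fun_prop
  have hWT : ∀ p, W (T p) = ‖G (cos θ • p.1 + sin θ • p.2)‖^2 * exp (h p.1 - h (cos θ • p.1 + sin θ • p.2)) := by
    intro p
    have : cos θ • (cos θ • p.1 + sin θ • p.2) + sin θ • (sin θ • p.1 - cos θ • p.2) = p.1 := by
      have : cos θ • (cos θ • p.1 + sin θ • p.2) + sin θ • (sin θ • p.1 - cos θ • p.2) = (sin θ^2 + cos θ^2) • p.1 := by module
      rw [this, sin_sq_add_cos_sq, one_smul]
    simp only [hW, hTd, this]
  have hWTi : Integrable (fun p => W (T p)) (γ.prod γ) := by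
    have := (hT.integrable_comp hWc.aestronglyMeasurable).2 hWi
    exact this
  have hWTe : ∫ p, W (T p) ∂(γ.prod γ) = ∫ p, W p ∂(γ.prod γ) := by
    rw [← integral_map hT.measurable.aemeasurable (by rw [hT.map_eq]; exact hWc.aestronglyMeasurable), hT.map_eq]
  calc _ ≤ ∫ p, (W p + W (T p))/2 ∂(γ.prod γ) := by
        apply integral_mono
        · apply wp_int_cont _ _ (by fun_prop) (M*M)
          intro p
          refine (norm_inner_le_norm _ _).trans ?_
          exact mul_le_mul (hM _) (hM _) (norm_nonneg _) ((norm_nonneg _).trans (hM 0))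
        · exact (hWi.add hWTi).div_const 2
        · intro p
          simp only
          rw [hWT]
          simp only [hW]
          set x := G p.1
          set x' := G (cos θ • p.1 + sin θ • p.2)
          set k := h (cos θ • p.1 + sin θ • p.2) - h p.1 with hk
          have e1 : h p.1 - h (cos θ • p.1 + sin θ • p.2) = -k := by rw [hk]; ring
          rw [e1]
          have e2 : exp k = exp (k/2)^2 := by rw [← exp_nat_mul]; ring_nf
          have e3 : exp (-k) = exp (-(k/2))^2 := by rw [← exp_nat_mul]; ring_nf
          have e4 : exp (k/2) * exp (-(k/2)) = 1 := by rw [← exp_add]; simp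
          have := real_inner_le_norm x x'
          rw [e2, e3]
          have e5 : ‖x‖*‖x'‖ = ‖x‖*‖x'‖*(exp (k/2) * exp (-(k/2))) := by rw [e4, mul_one]
          nlinarith [sq_nonneg (‖x‖*exp (k/2) - ‖x'‖*exp (-(k/2)))]
    _ = ∫ p, W p ∂(γ.prod γ) := by
        rw [integral_div, integral_add hWi hWTi, hWTe]; ring
    _ = ∫ u, ‖G u‖^2 * ∫ v, exp (h (cos θ • u + sin θ • v) - h u) ∂γ ∂γ := by
        rw [integral_prod _ hWi]; simp_rw [hinner]
    _ ≤ _ := by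
        apply integral_mono _ hR
        · intro u
          exact mul_le_mul_of_nonneg_left (hF u).2 (by positivity)
        · have := hWi.integral_prod_left
          simp_rw [hinner] at this
          exact this

lemma wp_amgm {d : ℕ} (hd : 2 ≤ d) (G : Ed d → Ed d) (hG : Continuous G) (hGc : HasCompactSupport G) (y : Ed d) (θ : ℝ) (hθ : 0 ≤ cos θ) :
    ∫ p, inner ℝ (G p.1) (G (cos θ • p.1 + sin θ • p.2)) ∂((stdGaussian d).prod (stdGaussian d)) ≤
    ∫ u, ‖G u‖^2 * wpG d y (cos θ) u ∂(stdGaussian d) :=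
  wp_amgm_gen (stdGaussian d) G hG hGc θ (wp_refl d θ) (wph d y (cos θ)) _ (wph_cont _ _) (wpG_cont _ _)
    fun u => wp_F hd u y (cos θ) (sin θ) hθ (by rw [add_comm]; exact sin_sq_add_cos_sq θ)


/-- Gaussian integration by parts. -/
lemma wp_ibp {d : ℕ} (k : Ed d → ℝ) (K : Ed d → Ed d) (hk : ∀ x, HasFDerivAt k (innerSL ℝ (K x)) x)
    (hK : Continuous K) (C : ℝ) (hkC : ∀ x, ‖k x‖ ≤ C) (hKC : ∀ x, ‖K x‖ ≤ C) (w : Ed d) :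
    ∫ v, k v * inner ℝ w v ∂(stdGaussian d) = ∫ v, inner ℝ (K v) w ∂(stdGaussian d) := by
  have hkc : Continuous k := continuous_iff_continuousAt.2 fun x => (hk x).continuousAt
  have hpd : ∀ x, HasFDerivAt (gaussPdf d) (-(gaussPdf d x) • innerSL ℝ x) x := by
    intro x
    unfold gaussPdf
    have h1 : HasFDerivAt (fun x : Ed d => -‖x‖^2/2) (-(innerSL ℝ x)) x := by
      have h0 : HasFDerivAt (fun x : Ed d => (-1/2:ℝ) * ‖x‖^2) ((-1/2:ℝ) • (2 • (innerSL ℝ x))) x :=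
        (hasStrictFDerivAt_norm_sq x).hasFDerivAt.const_mul (-1/2 : ℝ)
      have e : (fun x : Ed d => -‖x‖^2/2) = fun x => (-1/2:ℝ) * ‖x‖^2 := by funext x; ring
      rw [e]
      refine h0.congr_fderiv ?_
      ext v; simp; ring
    refine ((h1.exp).const_mul ((2 * π) ^ (-(d : ℝ) / 2))).congr_fderiv ?_
    ext v; simp; ring
  have hfk : ∀ x, fderiv ℝ k x = innerSL ℝ (K x) := fun x => (hk x).fderiv
  have hfp : ∀ x, fderiv ℝ (gaussPdf d) x = -(gaussPdf d x) • innerSL ℝ x := fun x => (hpd x).fderiv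
  have i1 : Integrable (fun v => inner ℝ (K v) w) (stdGaussian d) := by
    apply wp_int_cont _ _ (by fun_prop) (C * ‖w‖)
    intro x
    exact (norm_inner_le_norm _ _).trans (mul_le_mul_of_nonneg_right (hKC x) (norm_nonneg _))
  have i2 : Integrable (fun v => k v * inner ℝ w v) (stdGaussian d) := by
    refine ((wp_norm_int d).const_mul (C*‖w‖)).mono' (by fun_prop) (Filter.Eventually.of_forall fun v => ?_)
    rw [norm_mul, mul_assoc]
    exact mul_le_mul (hkC v) (norm_inner_le_norm _ _) (norm_nonneg _) ((norm_nonneg _).trans (hkC 0))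
  have i3 : Integrable k (stdGaussian d) := wp_int_cont _ _ hkc C hkC
  rw [wp_integrable_std] at i1 i2 i3
  have := integral_mul_fderiv_eq_neg_fderiv_mul_of_integrable (μ := (volume : Measure (Ed d))) (f := k) (g := gaussPdf d) (v := w)
    (by convert i1 using 2; rw [hfk]; simp [mul_comm])
    (by convert i2.neg using 2; rw [hfp]; simp [real_inner_comm]; ring)
    (by convert i3 using 2; simp [mul_comm])
    (fun x _ => (hk x).differentiableAt) (fun x _ => (hpd x).differentiableAt)
  rw [wp_int_std, wp_int_std]
  have e1 : ∀ x, gaussPdf d x • (k x * inner ℝ w x) = -(k x * fderiv ℝ (gaussPdf d) x w) := by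
    intro x; rw [hfp]; simp [real_inner_comm]; ring
  have e2 : ∀ x, gaussPdf d x • inner ℝ (K x) w = fderiv ℝ k x w * gaussPdf d x := by
    intro x; rw [hfk]; simp [mul_comm]
  simp_rw [e1, e2]
  rw [integral_neg, this, neg_neg]

section
variable {d : ℕ} (f : Ed d → ℝ) (G : Ed d → Ed d)

def wpPsi (d : ℕ) (G : Ed d → Ed d) (θ : ℝ) : ℝ :=
  ∫ p, inner ℝ (G p.1) (G (cos θ • p.1 + sin θ • p.2)) ∂((stdGaussian d).prod (stdGaussian d))

lemma wpPsi_cont (hG : Continuous G) (M : ℝ) (hM : ∀ x, ‖G x‖ ≤ M) : Continuous (wpPsi d G) := by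
  unfold wpPsi
  apply continuous_of_dominated (bound := fun _ => M*M)
  · intro θ; exact Continuous.aestronglyMeasurable (by fun_prop)
  · intro θ
    refine Filter.Eventually.of_forall fun p => ?_
    refine (norm_inner_le_norm _ _).trans ?_
    exact mul_le_mul (hM _) (hM _) (norm_nonneg _) ((norm_nonneg _).trans (hM 0))
  · exact integrable_const _
  · refine Filter.Eventually.of_forall fun p => by fun_prop

lemma wp_norm_int2 : Integrable (fun p : Ed d × Ed d => ‖p.1‖ + ‖p.2‖) ((stdGaussian d).prod (stdGaussian d)) :=
  ((wp_norm_int d).comp_fst _).add ((wp_norm_int d).comp_snd _)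

lemma wp_phi_deriv (hf : ∀ x, HasFDerivAt f (innerSL ℝ (G x)) x) (hG : Continuous G) (M : ℝ)
    (hM : ∀ x, ‖G x‖ ≤ M) (hfM : ∀ x, ‖f x‖ ≤ M) (θ : ℝ) :
    HasDerivAt (fun θ => ∫ p, f p.1 * f (cos θ • p.1 + sin θ • p.2) ∂((stdGaussian d).prod (stdGaussian d)))
      (∫ p, f p.1 * inner ℝ (G (cos θ • p.1 + sin θ • p.2)) (-sin θ • p.1 + cos θ • p.2) ∂((stdGaussian d).prod (stdGaussian d))) θ := by
  have hfc : Continuous f := continuous_iff_continuousAt.2 fun x => (hf x).continuousAt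
  have hM0 : 0 ≤ M := (norm_nonneg _).trans (hM 0)
  refine (hasDerivAt_integral_of_dominated_loc_of_deriv_le (s := univ) (bound := fun p : Ed d × Ed d => M*M*(‖p.1‖+‖p.2‖))
    (F := fun θ (p : Ed d × Ed d) => f p.1 * f (cos θ • p.1 + sin θ • p.2))
    (F' := fun θ (p : Ed d × Ed d) => f p.1 * inner ℝ (G (cos θ • p.1 + sin θ • p.2)) (-sin θ • p.1 + cos θ • p.2))
    Filter.univ_mem ?_ ?_ ?_ ?_ ?_ ?_).2
  · exact Filter.Eventually.of_forall fun θ => Continuous.aestronglyMeasurable (by fun_prop)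
  · apply wp_int_cont _ _ (by fun_prop) (M*M)
    intro p
    rw [norm_mul]
    exact mul_le_mul (hfM _) (hfM _) (norm_nonneg _) hM0
  · exact Continuous.aestronglyMeasurable (by fun_prop)
  · refine Filter.Eventually.of_forall fun p θ _ => ?_
    rw [norm_mul, mul_assoc]
    apply mul_le_mul (hfM _) _ (norm_nonneg _) hM0
    refine (norm_inner_le_norm _ _).trans ?_
    apply mul_le_mul (hM _) _ (norm_nonneg _) hM0
    refine (norm_add_le _ _).trans ?_
    rw [norm_smul, norm_smul, norm_neg]
    have h1 := abs_sin_le_one θ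
    have h2 := abs_cos_le_one θ
    rw [Real.norm_eq_abs, Real.norm_eq_abs]
    exact add_le_add (mul_le_of_le_one_left (norm_nonneg _) h1) (mul_le_of_le_one_left (norm_nonneg _) h2)
  · exact wp_norm_int2.const_mul _
  · refine Filter.Eventually.of_forall fun p θ _ => ?_
    apply HasDerivAt.const_mul
    have h1 : HasDerivAt (fun θ : ℝ => cos θ • p.1 + sin θ • p.2) (-sin θ • p.1 + cos θ • p.2) θ :=
      ((hasDerivAt_cos θ).smul_const p.1).add ((hasDerivAt_sin θ).smul_const p.2)
    exact (hf (cos θ • p.1 + sin θ • p.2)).comp_hasDerivAt θ h1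

lemma wp_phi_deriv_eq (hf : ∀ x, HasFDerivAt f (innerSL ℝ (G x)) x) (hG : Continuous G) (M : ℝ)
    (hM : ∀ x, ‖G x‖ ≤ M) (hfM : ∀ x, ‖f x‖ ≤ M) (θ : ℝ) :
    (∫ p, f p.1 * inner ℝ (G (cos θ • p.1 + sin θ • p.2)) (-sin θ • p.1 + cos θ • p.2) ∂((stdGaussian d).prod (stdGaussian d)))
     = - sin θ * wpPsi d G θ := by
  have hfc : Continuous f := continuous_iff_continuousAt.2 fun x => (hf x).continuousAt
  have hM0 : 0 ≤ M := (norm_nonneg _).trans (hM 0)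
  have hT := wp_rot d θ
  set H : Ed d × Ed d → ℝ := fun p => f (cos θ • p.1 - sin θ • p.2) * inner ℝ (G p.1) p.2 with hH
  have hHc : Continuous H := by fun_prop
  have e1 : ∀ p : Ed d × Ed d, f p.1 * inner ℝ (G (cos θ • p.1 + sin θ • p.2)) (-sin θ • p.1 + cos θ • p.2) = H (cos θ • p.1 + sin θ • p.2, -sin θ • p.1 + cos θ • p.2) := by
    intro p
    have : cos θ • (cos θ • p.1 + sin θ • p.2) - sin θ • (-sin θ • p.1 + cos θ • p.2) = p.1 := by
      have : cos θ • (cos θ • p.1 + sin θ • p.2) - sin θ • (-sin θ • p.1 + cos θ • p.2) = (sin θ^2 + cos θ^2) • p.1 := by module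
      rw [this, sin_sq_add_cos_sq, one_smul]
    simp only [hH, this]
  have e2 : (∫ p, f p.1 * inner ℝ (G (cos θ • p.1 + sin θ • p.2)) (-sin θ • p.1 + cos θ • p.2) ∂((stdGaussian d).prod (stdGaussian d)))
     = ∫ p, H p ∂((stdGaussian d).prod (stdGaussian d)) := by
    simp_rw [e1]
    have := integral_map (μ := (stdGaussian d).prod (stdGaussian d)) (f := H) hT.measurable.aemeasurable hHc.aestronglyMeasurable
    rw [hT.map_eq] at this
    exact this.symm
  have hHi : Integrable H ((stdGaussian d).prod (stdGaussian d)) := by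
    refine ((wp_norm_int2 (d := d)).const_mul (M*M)).mono' hHc.aestronglyMeasurable (Filter.Eventually.of_forall fun p => ?_)
    simp only [hH]
    rw [norm_mul, mul_assoc]
    apply mul_le_mul (hfM _) _ (norm_nonneg _) hM0
    refine (norm_inner_le_norm _ _).trans ?_
    apply mul_le_mul (hM _) _ (norm_nonneg _) hM0
    linarith [norm_nonneg p.1]
  rw [e2, integral_prod _ hHi]
  have e3 : ∀ u, ∫ v, H (u, v) ∂(stdGaussian d) = -sin θ * ∫ v, inner ℝ (G u) (G (cos θ • u + sin θ • v)) ∂(stdGaussian d) := by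
    intro u
    have := wp_ibp (d := d) (fun v => f (cos θ • u - sin θ • v)) (fun v => -sin θ • G (cos θ • u - sin θ • v))
      (by
        intro v
        have h1 : HasFDerivAt (fun v : Ed d => cos θ • u - sin θ • v) (-(sin θ • ContinuousLinearMap.id ℝ (Ed d))) v :=
          ((hasFDerivAt_id v).const_smul (sin θ)).const_sub _
        refine ((hf (cos θ • u - sin θ • v)).comp v h1).congr_fderiv ?_
        ext x; simp) (by fun_prop) M (fun v => hfM _) (fun v => by
          rw [norm_smul, norm_neg, Real.norm_eq_abs]
          exact (mul_le_of_le_one_left (norm_nonneg _) (abs_sin_le_one θ)).trans (hM _)) (G u)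
    simp only [hH]
    rw [this, ← integral_const_mul]
    have h2 := integral_map (μ := stdGaussian d) (φ := fun x : Ed d => -x) (f := fun v => -sin θ * inner ℝ (G u) (G (cos θ • u + sin θ • v))) measurable_neg.aemeasurable (Continuous.aestronglyMeasurable (by fun_prop))
    rw [wp_std_neg] at h2
    rw [h2]
    congr 1; funext v
    rw [inner_smul_left, real_inner_comm, smul_neg, ← sub_eq_add_neg]; simp
  simp_rw [e3]
  rw [integral_const_mul, wpPsi, integral_prod]
  apply wp_int_cont _ _ (by fun_prop) (M*M)
  intro p
  refine (norm_inner_le_norm _ _).trans ?_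
  exact mul_le_mul (hM _) (hM _) (norm_nonneg _) ((norm_nonneg _).trans (hM 0))

lemma wp_var_eq (hf : ∀ x, HasFDerivAt f (innerSL ℝ (G x)) x) (hG : Continuous G) (M : ℝ)
    (hM : ∀ x, ‖G x‖ ≤ M) (hfM : ∀ x, ‖f x‖ ≤ M) :
    varOf (stdGaussian d) f = ∫ θ in (0:ℝ)..(π/2), sin θ * wpPsi d G θ := by
  have hfc : Continuous f := continuous_iff_continuousAt.2 fun x => (hf x).continuousAt
  have h := intervalIntegral.integral_eq_sub_of_hasDerivAt (a := 0) (b := π/2)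
    (fun θ _ => (wp_phi_deriv f G hf hG M hM hfM θ).congr_deriv (wp_phi_deriv_eq f G hf hG M hM hfM θ))
    (by apply Continuous.intervalIntegrable; have := wpPsi_cont G hG M hM; fun_prop)
  simp only [cos_pi_div_two, sin_pi_div_two, cos_zero, sin_zero, one_smul, zero_smul, zero_add, add_zero] at h
  simp_rw [neg_mul] at h
  rw [intervalIntegral.integral_neg] at h
  have e1 : ∫ p : Ed d × Ed d, f p.1 * f p.2 ∂((stdGaussian d).prod (stdGaussian d)) = (∫ x, f x ∂(stdGaussian d))^2 := by
    rw [integral_prod_mul, sq]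
  have e2 : ∫ p : Ed d × Ed d, f p.1 * f p.1 ∂((stdGaussian d).prod (stdGaussian d)) = (∫ x, f x^2 ∂(stdGaussian d)) := by
    rw [integral_fun_fst (f := fun x => f x * f x)]
    simp [sq]
  rw [e1, e2] at h
  unfold varOf
  linarith
end


lemma wp_one_pos (d : ℕ) (ρ : ℝ) (hρ : ρ^2 ≤ 1) : 0 < 1 + wpα d*(1-ρ^2) := by
  have := wpα_pos d
  have : 0 ≤ 1 - ρ^2 := by linarith
  positivity

lemma wpG_bound {d : ℕ} (y : Ed d) (ρ : ℝ) (hρ : ρ^2 ≤ 1) (u : Ed d) : wpG d y ρ u ≤ exp (d/2 + 1) := by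
  unfold wpG
  apply exp_le_exp.2
  have h0 := wpα_pos d
  have h1 := wpα_le d
  have h2 : 0 ≤ 1 - ρ^2 := by linarith
  have hp := wp_one_pos d ρ hρ
  set α := wpα d
  have hs : α*(1-ρ^2) ≤ 1 := by nlinarith [sq_nonneg ρ]
  have hl : log (1+α*(1-ρ^2)) ≤ 1 := by linarith [Real.log_le_sub_one_of_pos hp]
  have hd : (d:ℝ)/2 * log (1+α*(1-ρ^2)) ≤ d/2*1 := by gcongr
  have hA : 0 ≤ exp (-‖y‖^2)*‖u+y‖^2 := by positivity
  have h3 : α - (1-α)*(exp (-‖y‖^2)*‖u+y‖^2) ≤ 1 := by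
    have : 0 ≤ (1-α)*(exp (-‖y‖^2)*‖u+y‖^2) := mul_nonneg (by linarith) hA
    linarith
  have h4 : 0 ≤ α*(1-ρ^2) := by positivity
  nlinarith

lemma wpG_joint {d : ℕ} (y : Ed d) : Continuous (fun p : ℝ × Ed d => wpG d y (cos p.1) p.2) := by
  unfold wpG
  have : ∀ p : ℝ × Ed d, 1 + wpα d*(1-cos p.1^2) ≠ 0 := fun p => (wp_one_pos d _ (cos_sq_le_one _)).ne'
  fun_prop (disch := assumption)

lemma wp_subst {d : ℕ} (hd : 2 ≤ d) (y u : Ed d) :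
    ∫ θ in (0:ℝ)..(π/2), sin θ * wpG d y (cos θ) u ≤ (d:ℝ)*(d+3)/(d-1)/(1+exp (-‖y‖^2)*‖u+y‖^2) := by
  have h := intervalIntegral.integral_comp_mul_deriv'' (a := 0) (b := π/2) (f := cos) (f' := fun x => -sin x) (g := fun ρ => wpG d y ρ u)
    (by fun_prop) (fun x _ => (hasDerivAt_cos x).hasDerivWithinAt) (by fun_prop)
    (by
      rintro ρ ⟨x, _, rfl⟩
      apply ContinuousAt.continuousWithinAt
      have : 1 + wpα d*(1-cos x^2) ≠ 0 := (wp_one_pos d _ (cos_sq_le_one _)).ne'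
      unfold wpG
      fun_prop (disch := assumption))
  rw [cos_zero, cos_pi_div_two] at h
  have hsy := intervalIntegral.integral_symm (f := fun ρ => wpG d y ρ u) (μ := volume) 0 1
  rw [hsy] at h
  have e : ∫ θ in (0:ℝ)..(π/2), sin θ * wpG d y (cos θ) u = ∫ ρ in (0:ℝ)..1, wpG d y ρ u := by
    rw [← neg_inj, ← h, ← intervalIntegral.integral_neg]
    congr 1; funext x; simp [mul_comm]
  rw [e]
  exact wp_scalar d (by exact_mod_cast hd) _ (by positivity) (wpα d) rfl

lemma wp_key {d : ℕ} (hd : 2 ≤ d) (f : Ed d → ℝ) (G : Ed d → Ed d) (hf : ∀ x, HasFDerivAt f (innerSL ℝ (G x)) x)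
    (hG : Continuous G) (hGc : HasCompactSupport G) (hfc : HasCompactSupport f) (y : Ed d) :
    varOf (stdGaussian d) f ≤ (d:ℝ)*(d+3)/(d-1) * ∫ u, ‖G u‖^2/(1+exp (-‖y‖^2)*‖u+y‖^2) ∂(stdGaussian d) := by
  have hfcont : Continuous f := continuous_iff_continuousAt.2 fun x => (hf x).continuousAt
  obtain ⟨M1, hM1⟩ := hGc.exists_bound_of_continuous hG
  obtain ⟨M2, hM2⟩ := hfc.exists_bound_of_continuous hfcont
  set M := max M1 M2
  have hM : ∀ x, ‖G x‖ ≤ M := fun x => (hM1 x).trans (le_max_left _ _)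
  have hfM : ∀ x, ‖f x‖ ≤ M := fun x => (hM2 x).trans (le_max_right _ _)
  have hM0 : 0 ≤ M := (norm_nonneg _).trans (hM 0)
  have hJ := wpG_joint y
  have hGcos : ∀ θ, Continuous (fun u => wpG d y (cos θ) u) := fun θ => wpG_cont y _
  set Q : ℝ × Ed d → ℝ := fun p => sin p.1 * (‖G p.2‖^2 * wpG d y (cos p.1) p.2) with hQ
  have hQc : Continuous Q := by fun_prop
  have hQb : ∀ p, ‖Q p‖ ≤ M^2 * exp (d/2+1) := by
    intro p
    simp only [hQ]
    have h1 := abs_sin_le_one p.1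
    have h2 := wpG_bound y (cos p.1) (cos_sq_le_one _) p.2
    have h3 : 0 < wpG d y (cos p.1) p.2 := exp_pos _
    rw [norm_mul, Real.norm_eq_abs, Real.norm_eq_abs, abs_of_nonneg (by positivity : 0 ≤ ‖G p.2‖^2 * wpG d y (cos p.1) p.2)]
    calc _ ≤ 1 * (‖G p.2‖^2 * wpG d y (cos p.1) p.2) := by gcongr
      _ ≤ _ := by rw [one_mul]; gcongr; exact hM _
  rw [wp_var_eq f G hf hG M hM hfM]
  haveI : IsFiniteMeasure (volume.restrict (uIoc (0:ℝ) (π/2))) := by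
    rw [uIoc_of_le (by positivity)]; infer_instance
  have hsw := intervalIntegral_integral_swap (a := 0) (b := π/2) (f := fun θ u => Q (θ, u)) (μ := stdGaussian d)
    (wp_int_cont _ _ (hQc) _ hQb)
  calc _ ≤ ∫ θ in (0:ℝ)..(π/2), ∫ u, Q (θ, u) ∂(stdGaussian d) := by
        apply intervalIntegral.integral_mono_on (by positivity)
        · apply Continuous.intervalIntegrable; have := wpPsi_cont G hG M hM; fun_prop
        · apply Continuous.intervalIntegrable
          apply continuous_of_dominated (bound := fun _ => M^2 * exp (d/2+1))
          · intro θ; exact Continuous.aestronglyMeasurable (by fun_prop)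
          · intro θ; exact Filter.Eventually.of_forall fun u => hQb _
          · exact integrable_const _
          · exact Filter.Eventually.of_forall fun u => by fun_prop
        · intro θ hθ
          have hc : 0 ≤ cos θ := cos_nonneg_of_neg_pi_div_two_le_of_le (by linarith [hθ.1, pi_pos]) hθ.2
          have hs : 0 ≤ sin θ := sin_nonneg_of_nonneg_of_le_pi hθ.1 (by linarith [hθ.2, pi_pos])
          simp only [hQ]
          rw [integral_const_mul]
          exact mul_le_mul_of_nonneg_left (wp_amgm hd G hG hGc y θ hc) hs
    _ = ∫ u, (∫ θ in (0:ℝ)..(π/2), Q (θ, u)) ∂(stdGaussian d) := hsw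
    _ ≤ ∫ u, (d:ℝ)*(d+3)/(d-1) * (‖G u‖^2/(1+exp (-‖y‖^2)*‖u+y‖^2)) ∂(stdGaussian d) := by
        apply integral_mono_of_nonneg
        · refine Filter.Eventually.of_forall fun u => ?_
          apply intervalIntegral.integral_nonneg (by positivity)
          intro θ hθ
          have hs : 0 ≤ sin θ := sin_nonneg_of_nonneg_of_le_pi hθ.1 (by linarith [hθ.2, pi_pos])
          simp only [hQ]
          have h3 : 0 < wpG d y (cos θ) u := exp_pos _
          positivity
        · have hpos : ∀ u : Ed d, 1+exp (-‖y‖^2)*‖u+y‖^2 ≠ 0 := fun u => by positivity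
          apply Integrable.const_mul
          apply wp_int_cont _ _ _ (M^2)
          · intro u
            rw [Real.norm_eq_abs, abs_of_nonneg (by positivity)]
            refine (div_le_self (by positivity) ?_).trans (by gcongr; exact hM u)
            have : 0 ≤ exp (-‖y‖^2)*‖u+y‖^2 := by positivity
            linarith
          · fun_prop (disch := assumption)
        · refine Filter.Eventually.of_forall fun u => ?_
          have e : ∀ θ, Q (θ, u) = ‖G u‖^2 * (sin θ * wpG d y (cos θ) u) := fun θ => by simp only [hQ]; ring
          simp only [e]
          rw [intervalIntegral.integral_const_mul]
          refine (mul_le_mul_of_nonneg_left (wp_subst hd y u) (by positivity)).trans (le_of_eq ?_)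
          ring
    _ = _ := integral_const_mul _ _


lemma wp_shift {d : ℕ} (g : Ed d → ℝ) (y : Ed d) :
    ∫ x, g x ∂(stdGaussian d) = ∫ x, g (x+y) * exp (-inner ℝ y x - ‖y‖^2/2) ∂(stdGaussian d) := by
  rw [wp_int_std, wp_int_std, ← integral_add_right_eq_self _ y]
  congr 1; funext x
  have : gaussPdf d (x+y) = gaussPdf d x * exp (-inner ℝ y x - ‖y‖^2/2) := by
    unfold gaussPdf
    rw [mul_assoc, ← exp_add, norm_add_sq_real, real_inner_comm]
    congr 2; ring
  rw [this, smul_eq_mul, smul_eq_mul]; ring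

lemma wp_h {d : ℕ} (y : Ed d) (k : ℝ) :
    Integrable (fun x => exp (k * (-inner ℝ y x - ‖y‖^2/2))) (stdGaussian d) ∧
    ∫ x, exp (k * (-inner ℝ y x - ‖y‖^2/2)) ∂(stdGaussian d) = exp ((k^2-k)/2*‖y‖^2) := by
  have h := wp_std_exp (d := d) 0 one_pos (-k • y)
  have e : ∀ x : Ed d, exp (k * (-inner ℝ y x - ‖y‖^2/2)) = exp (-k*‖y‖^2/2) * exp (0/2*‖x‖^2+inner ℝ (-k • y) x) := by
    intro x
    rw [← exp_add, real_inner_smul_left]; congr 1; ring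
  simp only [e]
  refine ⟨h.1.const_mul _, ?_⟩
  rw [integral_const_mul, h.2, sub_zero, one_rpow, one_mul, ← exp_add, norm_smul]
  congr 1
  rw [mul_pow, norm_eq_abs, sq_abs]; ring

lemma wp_center {d : ℕ} (g : Ed d → ℝ) (hg : Continuous g) (M : ℝ) (hM : ∀ x, ‖g x‖ ≤ M) (y : Ed d) :
    ∫ x, (g (x+y) - ∫ z, g z ∂(stdGaussian d))^2 ∂(stdGaussian d) ≤
      exp (‖y‖^2) * varOf (stdGaussian d) (fun x => g (x+y)) := by
  set f : Ed d → ℝ := fun x => g (x+y) with hf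
  set c := ∫ z, g z ∂(stdGaussian d) with hc
  have hfc : Continuous f := by fun_prop
  have hM0 : 0 ≤ M := (norm_nonneg _).trans (hM 0)
  have if1 : Integrable f (stdGaussian d) := wp_int_cont _ _ hfc M fun x => hM _
  have if2 : Integrable (fun x => f x ^2) (stdGaussian d) := wp_int_cont _ _ (by fun_prop) (M^2) fun x => by
    rw [norm_pow]; gcongr; exact hM _
  set h : Ed d → ℝ := fun x => exp (-inner ℝ y x - ‖y‖^2/2) with hh
  have hhc : Continuous h := by fun_prop
  obtain ⟨ih1, eh1⟩ := wp_h y 1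
  obtain ⟨ih2, eh2⟩ := wp_h y 2
  have E1 : ∀ x : Ed d, exp (1 * (-inner ℝ y x - ‖y‖^2/2)) = h x := fun x => by simp [hh]
  have E2 : ∀ x : Ed d, exp (2 * (-inner ℝ y x - ‖y‖^2/2)) = h x ^2 := fun x => by
    simp only [hh]; rw [← exp_nat_mul]; norm_num
  simp only [E1] at ih1 eh1
  simp only [E2] at ih2 eh2
  norm_num at eh1 eh2
  have ifh : Integrable (fun x => f x * h x) (stdGaussian d) :=
    ih1.bdd_mul hfc.aestronglyMeasurable (Filter.Eventually.of_forall fun x => hM _)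
  have ec : c = ∫ x, f x * h x ∂(stdGaussian d) := wp_shift g y
  set m := ∫ x, f x ∂(stdGaussian d) with hm
  set V := varOf (stdGaussian d) f with hV
  have hVd : V = ∫ x, f x ^2 ∂(stdGaussian d) - m^2 := rfl
  have quad : ∀ t a : ℝ, 0 ≤ t^2 * V + 2*t*(c - m) + (exp (‖y‖^2) - 1) := by
    intro t a
    have h0 : 0 ≤ ∫ x, (t*(f x - m) + (h x - 1))^2 ∂(stdGaussian d) := integral_nonneg fun x => sq_nonneg _
    have e : ∫ x, (t*(f x - m) + (h x - 1))^2 ∂(stdGaussian d) =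
        ∫ x, (t^2 * f x^2 + (-2*t^2*m-2*t)*f x + 2*t*(f x*h x) + h x^2 + (-2*t*m-2)*h x + (t*m+1)^2) ∂(stdGaussian d) := by
      congr 1; funext x; ring
    rw [e, integral_add (by fun_prop) (by fun_prop), integral_add (by fun_prop) (by fun_prop), integral_add (by fun_prop) (by fun_prop),
      integral_add (by fun_prop) (by fun_prop), integral_add (by fun_prop) (by fun_prop)] at h0
    simp only [integral_const_mul] at h0
    rw [eh1, eh2, ← ec, ← hm, integral_const, probReal_univ] at h0
    rw [hVd]
    simp only [smul_eq_mul] at h0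
    linarith
  have hV0 : 0 ≤ V := by
    have h0 : 0 ≤ ∫ x, (f x - m)^2 ∂(stdGaussian d) := integral_nonneg fun x => sq_nonneg _
    have e : ∫ x, (f x - m)^2 ∂(stdGaussian d) = ∫ x, (f x^2 + (-2*m)*f x + m^2) ∂(stdGaussian d) := by
      congr 1; funext x; ring
    rw [e, integral_add (by fun_prop) (by fun_prop), integral_add (by fun_prop) (by fun_prop), integral_const_mul, integral_const, probReal_univ, ← hm, smul_eq_mul] at h0
    rw [hVd]; linarith
  have hcs : (c-m)^2 ≤ V * (exp (‖y‖^2) - 1) := by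
    have := discrim_le_zero (a := V) (b := 2*(c-m)) (c := exp (‖y‖^2) - 1) (fun t => by
      have := quad t 0; linarith)
    unfold discrim at this
    linarith
  have e : ∫ x, (f x - c)^2 ∂(stdGaussian d) = ∫ x, (f x^2 + (-2*c)*f x + c^2) ∂(stdGaussian d) := by
    congr 1; funext x; ring
  change ∫ x, (f x - c)^2 ∂(stdGaussian d) ≤ _
  rw [e, integral_add (by fun_prop) (by fun_prop), integral_add (by fun_prop) (by fun_prop), integral_const_mul, integral_const, probReal_univ, ← hm, smul_eq_mul]
  have : ∫ x, f x ^2 ∂(stdGaussian d) = V + m^2 := by rw [hVd]; ring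
  rw [this]; nlinarith

lemma wp_grad {d : ℕ} (g : Ed d → ℝ) (hg : ContDiff ℝ (⊤ : ℕ∞) g) (hgc : HasCompactSupport g) :
    (∀ x, HasFDerivAt g (innerSL ℝ (gradient g x)) x) ∧ Continuous (gradient g) ∧ HasCompactSupport (gradient g) := by
  have hd : Differentiable ℝ g := hg.differentiable (by simp)
  refine ⟨fun x => ?_, ?_, ?_⟩
  · have := (hd x).hasGradientAt.hasFDerivAt
    exact this
  · have := hg.continuous_fderiv (by simp)
    unfold gradient
    exact (LinearIsometryEquiv.continuous _).comp this
  · have := hgc.fderiv (𝕜 := ℝ)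
    exact this.comp_left (g := (InnerProductSpace.toDual ℝ (Ed d)).symm) (map_zero _)

lemma wp_ae {d : ℕ} (R : ℝ) (ν : Measure (Ed d))
    (hν : msupport ν ⊆ Metric.closedBall 0 R) : ∀ᵐ y ∂ν, ‖y‖ ≤ R := by
  have : ν (msupport ν)ᶜ = 0 := by
    apply measure_null_of_locally_null
    intro x hx
    simp only [msupport, mem_compl_iff, mem_ofPred_eq, not_forall, not_not] at hx
    obtain ⟨U, hU, hxU, h0⟩ := hx
    exact ⟨U, mem_nhdsWithin_of_mem_nhds (hU.mem_nhds hxU), h0⟩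
  refine measure_mono_null ?_ this
  intro y hy hy'
  apply hy
  simpa using hν hy'

lemma wp_mono (B S A : ℝ) (hA : 0 ≤ A) (h : B ≤ S) :
    exp B * (1/(1+exp (-B)*A)) ≤ exp S * (1/(1+exp (-S)*A)) := by
  have e : exp (-S) ≤ exp (-B) := exp_le_exp.2 (by linarith)
  have e2 : exp B ≤ exp S := exp_le_exp.2 h
  have p1 : exp B * exp (-B) = 1 := by rw [← exp_add]; simp
  have p2 : exp S * exp (-S) = 1 := by rw [← exp_add]; simp
  rw [mul_one_div, mul_one_div, div_le_div_iff₀ (by positivity) (by positivity)]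
  have := exp_pos B
  have := exp_pos S
  have := exp_pos (-B)
  have := exp_pos (-S)
  have k1 : exp B * exp (-S) ≤ exp S * exp (-B) := by gcongr
  nlinarith


lemma wp_mconv {d : ℕ} (ν : Measure (Ed d)) [IsProbabilityMeasure ν] (F : Ed d → ℝ) (hF : Continuous F)
    (C : ℝ) (hC : ∀ x, ‖F x‖ ≤ C) :
    Integrable (fun y => ∫ x, F (x+y) ∂(stdGaussian d)) ν ∧
    ∫ x, F x ∂(mconv (stdGaussian d) ν) = ∫ y, (∫ x, F (x+y) ∂(stdGaussian d)) ∂ν := by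
  have hi : Integrable (fun p : Ed d × Ed d => F (p.1+p.2)) ((stdGaussian d).prod ν) :=
    wp_int_cont _ _ (by fun_prop) C fun p => hC _
  refine ⟨hi.integral_prod_right, ?_⟩
  unfold mconv
  rw [integral_map (by fun_prop) hF.aestronglyMeasurable, integral_prod_symm _ hi]

/-- Dimensional weighted Poincaré inequality for symmetric Gaussian
mixtures `μ = γ_d ⋆ ν` with `ν` symmetric and supported in a ball of radius `R`. -/
theorem weighted_poincare_mixture
    (d : ℕ) (hd : 2 ≤ d) (R : ℝ) (ν : Measure (Ed d)) [IsProbabilityMeasure ν]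
    (hν : msupport ν ⊆ Metric.closedBall 0 R)
    (hsym : Measure.map (fun x : Ed d => -x) ν = ν)
    (μ : Measure (Ed d)) (hμ : μ = mconv (stdGaussian d) ν)
    (g : Ed d → ℝ) (hg : ContDiff ℝ (⊤ : ℕ∞) g) (hgc : HasCompactSupport g) :
    varOf μ g ≤ (d : ℝ) * (d + 3) / (d - 1) * Real.exp (R ^ 2) *
      ∫ x, ‖gradient g x‖ ^ 2 / (1 + Real.exp (-R ^ 2) * ‖x‖ ^ 2) ∂μ := by
  have hgr := wp_grad g hg hgc
  obtain ⟨hD, hGc, hGs⟩ := hgr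
  have hgcont : Continuous g := hg.continuous
  obtain ⟨M1, hM1⟩ := hgc.exists_bound_of_continuous hgcont
  obtain ⟨M2, hM2⟩ := hGs.exists_bound_of_continuous hGc
  have hd2 : (2:ℝ) ≤ d := by exact_mod_cast hd
  set K : ℝ := (d : ℝ) * (d + 3) / (d - 1) with hK
  have hK0 : 0 ≤ K := div_nonneg (by positivity) (by linarith)
  set c := ∫ z, g z ∂(stdGaussian d) with hc
  have hne : ∀ s : ℝ, ∀ x : Ed d, 1 + exp s * ‖x‖^2 ≠ 0 := fun s x => by positivity
  set W : Ed d → ℝ := fun x => ‖gradient g x‖ ^ 2 / (1 + Real.exp (-R ^ 2) * ‖x‖ ^ 2) with hW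
  have hWc : Continuous W := by
    have := hne (-R^2)
    exact Continuous.div (by fun_prop) (by fun_prop) this
  have hb : ∀ s : ℝ, ∀ x z : Ed d, ‖‖gradient g x‖ ^ 2 / (1 + Real.exp s * ‖z‖ ^ 2)‖ ≤ M2^2 := by
    intro s x z
    rw [Real.norm_eq_abs, abs_of_nonneg (by positivity)]
    refine (div_le_self (by positivity) ?_).trans (by gcongr; exact hM2 x)
    have : 0 ≤ exp s*‖z‖^2 := by positivity
    linarith
  haveI hpμ : IsProbabilityMeasure μ := by
    rw [hμ]; exact Measure.isProbabilityMeasure_map (by fun_prop)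
  have hsb : ∀ x, ‖(g x - c)^2‖ ≤ (M1 + |c|)^2 := by
    intro x
    rw [norm_pow]
    gcongr
    exact (norm_sub_le _ _).trans (add_le_add (hM1 x) le_rfl)
  obtain ⟨i1, e1⟩ := wp_mconv ν (fun x => (g x - c)^2) (by fun_prop) _ hsb
  obtain ⟨i2, e2⟩ := wp_mconv ν W hWc (M2^2) (fun x => hb _ x x)
  rw [← hμ] at e1 e2
  have s1 : varOf μ g ≤ ∫ x, (g x - c)^2 ∂μ := by
    have j1 : Integrable g μ := wp_int_cont _ _ hgcont M1 hM1
    have j2 : Integrable (fun x => g x^2) μ := wp_int_cont _ _ (by fun_prop) (M1^2) fun x => by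
      rw [norm_pow]; gcongr; exact hM1 _
    have e : ∫ x, (g x - c)^2 ∂μ = ∫ x, (g x^2 + (-2*c)*g x + c^2) ∂μ := by
      congr 1; funext x; ring
    rw [e, integral_add (by fun_prop) (by fun_prop), integral_add (by fun_prop) (by fun_prop), integral_const_mul, integral_const, probReal_univ, smul_eq_mul]
    unfold varOf
    nlinarith [sq_nonneg (∫ x, g x ∂μ - c)]
  refine s1.trans ?_
  rw [e1, e2, ← integral_const_mul]
  refine integral_mono_ae i1 (i2.const_mul _) ?_
  filter_upwards [wp_ae R ν hν] with y hy
  have hBR : ‖y‖^2 ≤ R^2 := by gcongr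
  refine (wp_center g hgcont M1 hM1 y).trans ?_
  have hk := wp_key hd (fun x => g (x+y)) (fun x => gradient g (x+y))
    (fun x => by
      have := (hD (x+y)).comp x ((hasFDerivAt_id x).add_const y)
      exact this)
    (by fun_prop) (hGs.comp_homeomorph (Homeomorph.addRight y)) (hgc.comp_homeomorph (Homeomorph.addRight y)) y
  refine (mul_le_mul_of_nonneg_left hk (exp_pos _).le).trans ?_
  rw [← integral_const_mul, ← integral_const_mul, ← integral_const_mul]
  have hcy : Continuous fun x : Ed d => ‖gradient g (x+y)‖ ^ 2 / (1 + Real.exp (-‖y‖ ^ 2) * ‖x+y‖ ^ 2) :=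
    Continuous.div (by fun_prop) (by fun_prop) fun x => hne _ _
  refine integral_mono (((wp_int_cont _ _ hcy (M2^2) fun x => hb _ _ _).const_mul _).const_mul _)
    ((wp_int_cont _ _ (hWc.comp (continuous_add_const y)) (M2^2) fun x => hb _ _ _).const_mul _) ?_
  intro x
  have hm := wp_mono (‖y‖^2) (R^2) (‖x+y‖^2) (by positivity) hBR
  have hm2 := mul_le_mul_of_nonneg_left hm (mul_nonneg hK0 (sq_nonneg ‖gradient g (x+y)‖))
  simp only [hW]
  calc _ = K * ‖gradient g (x+y)‖^2 * (exp (‖y‖^2) * (1/(1+exp (-‖y‖^2)*‖x+y‖^2))) := by ring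
    _ ≤ _ := hm2
    _ = _ := by ring
end
end

section
/- Let a > 0, let ν be a probability measure on ℝ^d whose support is contained in a ball of radius R, let γ_d^a be the centered Gaussian with covariance a·Id_d, and let μ = γ_d^a ⋆ ν. If √a·e^{R²/(2a)} ≤ 1, then the standard Gaussian γ_d is majorized by μ: for every t ∈ ℝ, ∫_t^∞ F_{γ_d}(λ) dλ ≤ ∫_t^∞ F_μ(λ) dλ. -/
open MeasureTheory Real Set
open scoped ENNReal NNReal

noncomputable section

section G
open ProbabilityTheory

lemma aux_tanh (θ : ℝ) (h0 : 0 ≤ θ) (h1 : θ ≤ 1) (t : ℝ) (ht : 0 ≤ t) :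
    θ * (sinh t / cosh t) ≤ sinh (θ * t) / cosh (θ * t) := by
  have hd : ∀ x : ℝ, HasDerivAt (fun t => sinh (θ * t) / cosh (θ * t) - θ * (sinh t / cosh t))
      (θ * (1 / cosh (θ * x) ^ 2 - 1 / cosh x ^ 2)) x := by
    intro x
    have hx : HasDerivAt (fun t : ℝ => θ * t) θ x := by simpa using (hasDerivAt_id x).const_mul θ
    have e1 := (hx.sinh.div hx.cosh (cosh_pos _).ne').sub
      (((hasDerivAt_sinh x).div (hasDerivAt_cosh x) (cosh_pos _).ne').const_mul θ)
    refine HasDerivAt.congr_deriv e1 ?_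
    have a1 := cosh_sq (θ * x)
    have a2 := cosh_sq x
    have p1 := cosh_pos (θ * x)
    have p2 := cosh_pos x
    have b1 : cosh (θ * x) * θ = θ * cosh (θ*x) := by ring
    have c1 : (cosh (θ * x) * θ * cosh (θ * x) - sinh (θ * x) * (sinh (θ * x) * θ)) = θ := by
      linear_combination θ * a1
    have c2 : (cosh x * cosh x - sinh x * sinh x) = 1 := by linear_combination a2
    rw [c1, c2]; ring
  have hm : MonotoneOn (fun t => sinh (θ * t) / cosh (θ * t) - θ * (sinh t / cosh t)) (Ici 0) := by
    apply monotoneOn_of_deriv_nonneg (convex_Ici 0)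
    · exact fun x _ => (hd x).continuousAt.continuousWithinAt
    · exact fun x _ => (hd x).differentiableAt.differentiableWithinAt
    · intro x hx
      rw [interior_Ici, mem_Ioi] at hx
      rw [(hd x).deriv]
      apply mul_nonneg h0
      rw [sub_nonneg]
      apply one_div_le_one_div_of_le (by have := cosh_pos (θ * x); positivity)
      have : cosh (θ * x) ≤ cosh x := by
        rw [cosh_le_cosh, abs_of_nonneg (by positivity), abs_of_pos hx]
        nlinarith
      have := cosh_pos (θ * x)
      gcongr
  have := hm (a := 0) (by simp) (b := t) (by simpa using ht) ht
  simp at this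
  linarith

lemma aux_logcosh (θ : ℝ) (h0 : 0 ≤ θ) (h1 : θ ≤ 1) (t : ℝ) (ht : 0 ≤ t) :
    θ ^ 2 * log (cosh t) ≤ log (cosh (θ * t)) := by
  have hd : ∀ x : ℝ, HasDerivAt (fun t => log (cosh (θ * t)) - θ ^ 2 * log (cosh t))
      (θ * (sinh (θ * x) / cosh (θ * x) - θ * (sinh x / cosh x))) x := by
    intro x
    have hx : HasDerivAt (fun t : ℝ => θ * t) θ x := by simpa using (hasDerivAt_id x).const_mul θ
    have e1 := (hx.cosh.log (cosh_pos _).ne').sub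
      (((hasDerivAt_cosh x).log (cosh_pos _).ne').const_mul (θ^2))
    refine HasDerivAt.congr_deriv e1 ?_
    ring
  have hm : MonotoneOn (fun t => log (cosh (θ * t)) - θ ^ 2 * log (cosh t)) (Ici 0) := by
    apply monotoneOn_of_deriv_nonneg (convex_Ici 0)
    · exact fun x _ => (hd x).continuousAt.continuousWithinAt
    · exact fun x _ => (hd x).differentiableAt.differentiableWithinAt
    · intro x hx
      rw [interior_Ici, mem_Ioi] at hx
      rw [(hd x).deriv]
      apply mul_nonneg h0
      rw [sub_nonneg]
      exact aux_tanh θ h0 h1 x hx.le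
  have := hm (a := 0) (by simp) (b := t) (by simpa using ht) ht
  simp at this
  linarith

/-- log-ratio of symmetrised densities. -/
def hfun (m a x : ℝ) : ℝ :=
  - log (√a) - m ^ 2 / (2 * a) + log (cosh (m * x / a)) - x ^ 2 / 2 * (1 / a - 1)

lemma hfun_abs (m a x : ℝ) : hfun m a |x| = hfun m a x := by
  unfold hfun
  rw [sq_abs, ← cosh_abs (m * |x| / a), ← cosh_abs (m * x / a)]
  simp [abs_div, abs_mul]

lemma hfun_abs' (m a x : ℝ) : hfun |m| a x = hfun m a x := by
  unfold hfun
  rw [sq_abs, ← cosh_abs (|m| * x / a), ← cosh_abs (m * x / a)]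
  simp [abs_div, abs_mul]

lemma hfun_cross (m a : ℝ) (ha : 0 < a) (hl : √a * exp (m ^ 2 / (2 * a)) ≤ 1)
    (x r : ℝ) (hxr : |x| ≤ r) (hr : 0 ≤ hfun m a r) : 0 ≤ hfun m a x := by
  rw [← hfun_abs]
  rw [← hfun_abs'] at hr ⊢
  have hc : 0 ≤ - log (√a) - |m| ^ 2 / (2 * a) := by
    rw [sq_abs]
    have := log_le_log (by positivity) hl
    rw [log_mul (by positivity) (by positivity), log_exp, log_one] at this
    linarith
  have hx0 := abs_nonneg x
  have hm0 := abs_nonneg m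
  generalize |x| = x at *
  generalize |m| = m at *
  rcases (hx0.trans hxr).eq_or_lt with h | h
  · have : x = r := by linarith
    rw [this]; exact hr
  have hθ0 : 0 ≤ x / r := by positivity
  have hθ1 : x / r ≤ 1 := by rw [div_le_one h]; exact hxr
  have hx : x = (x / r) * r := by field_simp
  generalize x / r = θ at *
  subst hx
  have := aux_logcosh θ hθ0 hθ1 (m * r / a) (by positivity)
  unfold hfun at hr ⊢
  rw [show m * (θ * r) / a = θ * (m * r / a) by ring]
  have h2 : 0 ≤ (1 - θ ^ 2) * (- log (√a) - m ^ 2 / (2 * a)) := mul_nonneg (by nlinarith) hc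
  have h3 := mul_nonneg (sq_nonneg θ) hr
  nlinarith

lemma pdf_sum (m : ℝ) (v : ℝ≥0) (hv : 0 < v) (x : ℝ) :
    gaussianPDFReal m v x + gaussianPDFReal (-m) v x
      = exp (hfun m v x) * (2 * gaussianPDFReal 0 1 x) := by
  have hv' : (0:ℝ) < v := hv
  unfold gaussianPDFReal hfun
  have e1 : exp (- log (√v) - m ^ 2 / (2 * v) + log (cosh (m * x / v)) - x ^ 2 / 2 * (1 / (v:ℝ) - 1))
     = (√v)⁻¹ * cosh (m * x / v) * exp (- m ^ 2 / (2 * v)  - x ^ 2 / 2 * (1 / (v:ℝ) - 1)) := by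
    rw [show (- log (√v) - m ^ 2 / (2 * v) + log (cosh (m * x / v)) - x ^ 2 / 2 * (1 / (v:ℝ) - 1)) =
      - log (√v) + log (cosh (m * x / v)) + (- m ^ 2 / (2 * v)  - x ^ 2 / 2 * (1 / (v:ℝ) - 1)) by ring]
    rw [exp_add, exp_add, exp_neg, exp_log (by positivity), exp_log (cosh_pos _)]
  rw [e1, sqrt_mul (by positivity), cosh_eq]
  simp only [sub_zero, NNReal.coe_one, mul_one, mul_inv]
  have e2 : rexp (-(x - m) ^ 2 / (2 * v)) = exp (m * x / v) *
     (exp (- m ^ 2 / (2 * v)  - x ^ 2 / 2 * (1 / (v:ℝ) - 1)) * exp (-x ^ 2 / 2)) := by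
    rw [← exp_add, ← exp_add]; congr 1; field_simp; ring
  have e3 : rexp (-(x - -m) ^ 2 / (2 * v)) = exp (-(m * x / v)) *
     (exp (- m ^ 2 / (2 * v)  - x ^ 2 / 2 * (1 / (v:ℝ) - 1)) * exp (-x ^ 2 / 2)) := by
    rw [← exp_add, ← exp_add]; congr 1; field_simp; ring
  rw [e2, e3]
  ring

lemma two_gauss (m : ℝ) (v : ℝ≥0) (hv : 0 < v) (S : Set ℝ) (hS : MeasurableSet S)
    (hsymm : ∀ x, -x ∈ S ↔ x ∈ S) :
    2 * gaussianReal m v S = ∫⁻ x in S, ENNReal.ofReal (exp (hfun m v x) * (2 * gaussianPDFReal 0 1 x)) := by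
  have h1 : gaussianReal (-m) v S = gaussianReal m v S := by
    rw [← gaussianReal_map_neg, Measure.map_apply (by fun_prop) hS]
    congr 1; ext x; simp [hsymm]
  rw [two_mul]; nth_rw 2 [← h1]
  rw [gaussianReal_apply _ hv.ne', gaussianReal_apply _ hv.ne', ← lintegral_add_left (by fun_prop)]
  refine lintegral_congr fun x => ?_
  rw [← pdf_sum m v hv, ENNReal.ofReal_add (gaussianPDFReal_nonneg _ _ _) (gaussianPDFReal_nonneg _ _ _)]
  rfl

lemma two_gauss' (S : Set ℝ) :
    2 * gaussianReal 0 1 S = ∫⁻ x in S, ENNReal.ofReal (2 * gaussianPDFReal 0 1 x) := by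
  rw [gaussianReal_apply _ one_ne_zero, ← lintegral_const_mul _ (by fun_prop)]
  refine lintegral_congr fun x => ?_
  rw [ENNReal.ofReal_mul (by norm_num)]; simp [gaussianPDF]

lemma gauss1d (m : ℝ) (v : ℝ≥0) (hv : 0 < v) (hl : √v * exp (m ^ 2 / (2 * v)) ≤ 1) (r : ℝ) :
    gaussianReal 0 1 {x | |x| ≤ r} ≤ gaussianReal m v {x | |x| ≤ r} := by
  have hS : MeasurableSet {x : ℝ | |x| ≤ r} := measurableSet_le (by fun_prop) (by fun_prop)
  have c2 : ∀ {a b : ℝ≥0∞}, 2 * a ≤ 2 * b → a ≤ b := fun h =>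
    (ENNReal.mul_le_mul_iff_right (by norm_num) (by norm_num)).1 h
  by_cases hr : 0 ≤ r
  swap
  · have : {x : ℝ | |x| ≤ r} = ∅ := by
      ext x
      simp only [mem_ofPred_eq, mem_empty_iff_false, iff_false, not_le]
      exact (not_le.1 hr).trans_le (abs_nonneg x)
    simp [this]
  by_cases h : 0 ≤ hfun m v r
  · apply c2
    rw [two_gauss m v hv _ hS (by simp), two_gauss']
    refine setLIntegral_mono' hS fun x hx => ENNReal.ofReal_le_ofReal ?_
    have := hfun_cross m v hv hl x r hx h
    exact le_mul_of_one_le_left (by have := gaussianPDFReal_nonneg 0 1 x; positivity) (one_le_exp this)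
  · have key : gaussianReal m v {x | |x| ≤ r}ᶜ ≤ gaussianReal 0 1 {x | |x| ≤ r}ᶜ := by
      apply c2
      rw [two_gauss m v hv _ hS.compl (by simp), two_gauss']
      refine setLIntegral_mono' hS.compl fun x hx => ENNReal.ofReal_le_ofReal ?_
      apply mul_le_of_le_one_left (by have := gaussianPDFReal_nonneg 0 1 x; positivity)
      rw [exp_le_one_iff]
      by_contra hc
      push Not at hc
      have hx' : r < |x| := by simpa using hx
      apply h
      apply hfun_cross m v hv hl r |x|
      · rw [abs_of_nonneg hr]; exact hx'.le
      · rw [hfun_abs]; exact hc.le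
    rw [prob_compl_eq_one_sub hS, prob_compl_eq_one_sub hS] at key
    exact (ENNReal.sub_le_sub_iff_left prob_le_one ENNReal.one_ne_top).1 key
lemma pi_mono (d : ℕ) (μ ν : Fin d → Measure ℝ) [∀ i, IsProbabilityMeasure (μ i)]
    [∀ i, IsProbabilityMeasure (ν i)] (f g : Fin d → ℝ → ℝ) (hf : ∀ i, Measurable (f i))
    (hg : ∀ i, Measurable (g i))
    (h : ∀ i c, ν i {x | g i x ≤ c} ≤ μ i {x | f i x ≤ c}) (c : ℝ) :
    Measure.pi ν {x | ∑ i, g i (x i) ≤ c} ≤ Measure.pi μ {x | ∑ i, f i (x i) ≤ c} := by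
  induction d generalizing c with
  | zero =>
    have hμν : μ = ν := Subsingleton.elim _ _
    subst hμν
    simp
  | succ n ih =>
    have key : ∀ (μ : Fin (n+1) → Measure ℝ) [∀ i, IsProbabilityMeasure (μ i)]
       (f : Fin (n+1) → ℝ → ℝ) (hf : ∀ i, Measurable (f i)),
       Measure.pi μ {x | ∑ i, f i (x i) ≤ c} =
        ((μ 0).prod (Measure.pi fun i : Fin n => μ i.succ))
          {p | f 0 p.1 + ∑ i : Fin n, f i.succ (p.2 i) ≤ c} := by
      intro μ _ f hf
      have := measurePreserving_piFinSuccAbove μ 0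
      have h2 := this.measure_preimage_equiv {p | f 0 p.1 + ∑ i : Fin n, f i.succ (p.2 i) ≤ c}
      simp only [Fin.zero_succAbove] at h2
      rw [← h2]
      congr 1
      ext x
      simp [Fin.sum_univ_succ, MeasurableEquiv.piFinSuccAbove, Fin.tail]
    rw [key μ f hf, key ν g hg]
    have ms : ∀ (f0 : ℝ → ℝ) (f : Fin n → ℝ → ℝ), Measurable f0 → (∀ i, Measurable (f i)) →
       MeasurableSet {p : ℝ × (Fin n → ℝ) | f0 p.1 + ∑ i : Fin n, f i (p.2 i) ≤ c} := by
      intro f0 f h0 h1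
      apply measurableSet_le _ measurable_const
      fun_prop
    calc _ ≤ ((ν 0).prod (Measure.pi fun i : Fin n => μ i.succ))
          {p | g 0 p.1 + ∑ i : Fin n, f i.succ (p.2 i) ≤ c} := by
            rw [Measure.prod_apply (ms _ (fun i => g i.succ) (hg 0) fun i => hg _),
              Measure.prod_apply (ms _ (fun i => f i.succ) (hg 0) fun i => hf _)]
            refine lintegral_mono fun x => ?_
            have := ih (fun i => μ i.succ) (fun i => ν i.succ) (fun i => f i.succ) (fun i => g i.succ)
              (fun i => hf _) (fun i => hg _) (fun i => h _) (c - g 0 x)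
            simpa [le_sub_iff_add_le'] using this
      _ ≤ _ := by
            rw [Measure.prod_apply_symm (ms _ (fun i => f i.succ) (hg 0) fun i => hf _),
              Measure.prod_apply_symm (ms _ (fun i => f i.succ) (hf 0) fun i => hf _)]
            refine lintegral_mono fun x => ?_
            have := h 0 (c - ∑ i : Fin n, f i.succ (x i))
            simpa [le_sub_iff_add_le] using this

lemma pi_gauss (d : ℕ) (v : ℝ≥0) (hv : v ≠ 0) :
    Measure.pi (fun _ : Fin d => gaussianReal 0 v) =
      (volume : Measure (Fin d → ℝ)).withDensity
        (fun x => ENNReal.ofReal (∏ i, gaussianPDFReal 0 v (x i))) := by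
  refine Measure.pi_eq fun s hs => ?_
  rw [withDensity_apply _ (MeasurableSet.univ_pi hs), ← lintegral_indicator (MeasurableSet.univ_pi hs)]
  have e : ∀ x : Fin d → ℝ, (univ.pi s).indicator
      (fun x => ENNReal.ofReal (∏ i, gaussianPDFReal 0 v (x i))) x =
      ENNReal.ofReal (∏ i, (s i).indicator (gaussianPDFReal 0 v) (x i)) := by
    intro x
    by_cases hx : x ∈ univ.pi s
    · rw [indicator_of_mem hx]
      congr 1
      refine Finset.prod_congr rfl fun i _ => ?_
      rw [indicator_of_mem (hx i (mem_univ i))]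
    · rw [indicator_of_notMem hx]
      simp only [mem_pi, mem_univ, true_imp_iff, not_forall] at hx
      obtain ⟨i, hi⟩ := hx
      rw [Finset.prod_eq_zero (Finset.mem_univ i) (indicator_of_notMem hi _), ENNReal.ofReal_zero]
  have hint : ∀ i, Integrable ((s i).indicator (gaussianPDFReal 0 v)) :=
    fun i => (integrable_gaussianPDFReal 0 v).indicator (hs i)
  have nn : ∀ i x, 0 ≤ (s i).indicator (gaussianPDFReal 0 v) x :=
    fun i x => indicator_nonneg (fun x _ => gaussianPDFReal_nonneg _ _ _) x
  rw [lintegral_congr e, ← ofReal_integral_eq_lintegral_ofReal, 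
    integral_fintype_prod_volume_eq_prod (fun i => (s i).indicator (gaussianPDFReal 0 v)),
    ENNReal.ofReal_prod_of_nonneg]
  · refine Finset.prod_congr rfl fun i _ => ?_
    rw [integral_indicator (hs i), gaussianReal_apply_eq_integral _ hv]
  · exact fun i _ => integral_nonneg (nn i)
  · exact Integrable.fintype_prod hint
  · exact ae_of_all _ fun x => Finset.prod_nonneg fun i _ => nn _ _

lemma prod_pdf (d : ℕ) (v : ℝ≥0) (hv : 0 < v) (x : Ed d) :
    ∏ i, gaussianPDFReal 0 v (x i) =
      (2 * π * v) ^ (-(d : ℝ) / 2) * Real.exp (-‖x‖ ^ 2 / (2 * v)) := by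
  have hv' : (0:ℝ) < v := hv
  unfold gaussianPDFReal
  rw [Finset.prod_mul_distrib, ← exp_sum, EuclideanSpace.norm_sq_eq]
  simp only [sub_zero, Finset.prod_const, Finset.card_univ, Fintype.card_fin, norm_eq_abs, sq_abs]
  congr 1
  · rw [sqrt_eq_rpow, ← rpow_neg (by positivity), ← rpow_natCast, ← rpow_mul (by positivity)]
    congr 1; ring
  · rw [← Finset.sum_div, Finset.sum_neg_distrib]

lemma cov_eq (d : ℕ) (v : ℝ≥0) (hv : 0 < v) (S : Set (Ed d)) (hS : MeasurableSet S) :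
    gaussianCov d v S = Measure.pi (fun _ : Fin d => gaussianReal 0 v) (WithLp.toLp 2 ⁻¹' S) := by
  have mp := PiLp.volume_preserving_toLp (Fin d)
  rw [pi_gauss d v hv.ne', withDensity_apply _ (mp.measurable hS), gaussianCov, withDensity_apply _ hS,
    ← mp.setLIntegral_comp_preimage hS]
  · refine lintegral_congr fun x => ?_
    rw [← prod_pdf d v hv]
  · fun_prop

lemma isProb_cov (d : ℕ) (v : ℝ≥0) (hv : 0 < v) : IsProbabilityMeasure (gaussianCov d v) :=
  ⟨by rw [cov_eq d v hv _ MeasurableSet.univ]; simp⟩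

lemma ball_comp (d : ℕ) (v : ℝ≥0) (hv : 0 < v) (R : ℝ) (hl : √v * exp (R ^ 2 / (2 * v)) ≤ 1)
    (y : Ed d) (hy : ‖y‖ ≤ R) (c : ℝ) :
    gaussianCov d ((1 : ℝ≥0) : ℝ) {x | ‖x‖ ^ 2 ≤ c} ≤ gaussianCov d v {x | ‖x + y‖ ^ 2 ≤ c} := by
  have hv' : (0:ℝ) < v := hv
  rw [cov_eq d 1 one_pos _ (measurableSet_le (by fun_prop) (by fun_prop)),
    cov_eq d v hv _ (measurableSet_le (by fun_prop) (by fun_prop))]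
  have := pi_mono d (fun _ => gaussianReal 0 v) (fun _ => gaussianReal 0 1)
    (fun i x => (x + y i) ^ 2) (fun i x => x ^ 2) (fun i => by fun_prop) (fun i => by fun_prop) ?_ c
  · simpa [EuclideanSpace.norm_sq_eq] using this
  · intro i c
    by_cases hc : c < 0
    · have : {x : ℝ | x ^ 2 ≤ c} = ∅ := by
        ext x
        simp only [mem_ofPred_eq, mem_empty_iff_false, iff_false, not_le]
        exact hc.trans_le (sq_nonneg x)
      simp [this]
    push Not at hc
    have hyi : |y i| ≤ R := by
      have := PiLp.norm_apply_le y i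
      rw [norm_eq_abs] at this
      exact this.trans hy
    have hl' : √v * exp (y i ^ 2 / (2 * v)) ≤ 1 := by
      refine le_trans ?_ hl
      have : y i ^ 2 ≤ R ^ 2 := sq_le_sq' (by linarith [abs_le.1 hyi]) (abs_le.1 hyi).2
      gcongr
    have h := gauss1d (y i) v hv hl' (√c)
    have e : {x : ℝ | |x| ≤ √c} = {x : ℝ | x ^ 2 ≤ c} := by
      ext x
      simp only [mem_ofPred_eq]
      refine ⟨fun h => ?_, fun h => abs_le_sqrt h⟩
      rw [← sq_abs, ← sq_sqrt hc]
      exact pow_le_pow_left₀ (abs_nonneg x) h 2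
    have e2 : gaussianReal (y i) v {x : ℝ | x ^ 2 ≤ c} = gaussianReal 0 v {x : ℝ | (x + y i) ^ 2 ≤ c} := by
      have := gaussianReal_map_add_const (μ := 0) (v := v) (y i)
      rw [zero_add] at this
      rw [← this, Measure.map_apply (by fun_prop) (measurableSet_le (by fun_prop) (by fun_prop))]
      rfl
    rw [e] at h
    rw [← e2]
    exact h

/-- Layer cake, split at level `t`. -/
lemma layer (d : ℕ) (g : Ed d → ℝ) (hg : Measurable g) (h0 : ∀ x, 0 ≤ g x)
    (A : Set (Ed d)) (hA : MeasurableSet A) (t : ℝ) (ht : 0 ≤ t) :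
    ∫⁻ x in A, ENNReal.ofReal (g x) =
      (∫⁻ l in Ioc 0 t, volume ({x | l ≤ g x} ∩ A)) + ∫⁻ l in Ioi t, volume ({x | l ≤ g x} ∩ A) := by
  rw [lintegral_eq_lintegral_meas_le _ (ae_of_all _ h0) hg.aemeasurable, ← Ioc_union_Ioi_eq_Ioi ht,
    lintegral_union measurableSet_Ioi (Ioc_disjoint_Ioi le_rfl)]
  simp only [Measure.restrict_apply' hA]

lemma ae_norm (d : ℕ) (R : ℝ) (ν : Measure (Ed d))
    (hν : msupport ν ⊆ Metric.closedBall 0 R) : ∀ᵐ y ∂ν, ‖y‖ ≤ R := by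
  have : ν.support ⊆ msupport ν := by
    intro x hx U hU hxU
    exact ((Measure.mem_support_iff_forall x).1 hx U (hU.mem_nhds hxU)).ne'
  filter_upwards [Measure.support_mem_ae (μ := ν)] with y hy
  simpa using hν (this hy)

lemma conv_apply (d : ℕ) (μ ν : Measure (Ed d)) [SFinite ν] [SFinite μ] (A : Set (Ed d))
    (hA : MeasurableSet A) : mconv μ ν A = ∫⁻ y, μ {x | x + y ∈ A} ∂ν := by
  rw [mconv, Measure.map_apply (by fun_prop) hA, Measure.prod_apply_symm (by measurability)]
  rfl

lemma ac_cov (d : ℕ) (a : ℝ) (ha : 0 < a) : (volume : Measure (Ed d)) ≪ gaussianCov d a := by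
  apply withDensity_absolutelyContinuous'
  · fun_prop
  · refine ae_of_all _ fun x => ?_
    have : 0 < (2 * π * a) ^ (-(d : ℝ) / 2) * Real.exp (-‖x‖ ^ 2 / (2 * a)) := by positivity
    simpa using this

lemma ac_conv (d : ℕ) (a : ℝ) (ha : 0 < a) (ν : Measure (Ed d)) [IsProbabilityMeasure ν]
    [SFinite (gaussianCov d a)] (Z : Set (Ed d)) (hZ : MeasurableSet Z)
    (h : mconv (gaussianCov d a) ν Z = 0) : volume Z = 0 := by
  rw [conv_apply _ _ _ _ hZ, lintegral_eq_zero_iff' ?_] at h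
  · obtain ⟨y, hy⟩ := h.exists
    have := ac_cov d a ha hy
    rw [← measure_preimage_add_right volume y Z]
    exact this
  · apply Measurable.aemeasurable
    exact measurable_measure_prodMk_right (μ := gaussianCov d a)
      (s := {p : Ed d × Ed d | p.1 + p.2 ∈ Z}) (by measurability)
lemma cov_one (d : ℕ) : gaussianCov d ((1 : ℝ≥0) : ℝ) =
    (volume : Measure (Ed d)).withDensity fun x => ENNReal.ofReal (gaussPdf d x) := by
  simp [gaussianCov, gaussPdf]

lemma level_eq (d : ℕ) (t : ℝ) (ht : 0 < t) :
    ∃ c : ℝ, {x : Ed d | t ≤ gaussPdf d x} = {x | ‖x‖ ^ 2 ≤ c} := by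
  have hK : 0 < (2 * π) ^ (-(d : ℝ) / 2) := by positivity
  refine ⟨-2 * log (t / (2 * π) ^ (-(d : ℝ) / 2)), ?_⟩
  ext x
  simp only [mem_ofPred_eq, gaussPdf]
  rw [← div_le_iff₀' hK, ← log_le_iff_le_exp (by positivity)]
  constructor <;> intro h <;> linarith

end G

/-- If `μ = γ_d^a ⋆ ν` with `ν` supported in a ball of radius `R`, `a > 0`,
and `√a·e^{R²/(2a)} ≤ 1`, then the standard Gaussian is majorized by `μ`. -/
theorem gaussian_majorized_mixture
    (d : ℕ) (a R : ℝ) (ha : 0 < a) (ν : Measure (Ed d)) [IsProbabilityMeasure ν]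
    (hν : msupport ν ⊆ Metric.closedBall 0 R)
    (μ : Measure (Ed d)) (hμ : μ = mconv (gaussianCov d a) ν)
    (p : Ed d → ℝ)
    (hp : μ = (volume : Measure (Ed d)).withDensity fun x => ENNReal.ofReal (p x))
    (hlip : Real.sqrt a * Real.exp (R ^ 2 / (2 * a)) ≤ 1) :
    ∀ t : ℝ,
      ∫⁻ l in Set.Ioi t, distFun (gaussPdf d) l ≤ ∫⁻ l in Set.Ioi t, distFun p l := by
  lift a to ℝ≥0 using ha.le
  rename' a => v
  have hv : 0 < v := by exact_mod_cast ha
  have := isProb_cov d v hv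
  have := isProb_cov d 1 one_pos
  obtain ⟨g, hgm, hgle, hgeq⟩ := exists_measurable_le_withDensity_eq
    (μ := (volume : Measure (Ed d))) (fun x => ENNReal.ofReal (p x))
  have hgtop : ∀ x, g x ≠ ∞ := fun x => ((hgle x).trans_lt ENNReal.ofReal_lt_top).ne
  have hμg : μ = (volume : Measure (Ed d)).withDensity g := hp.trans hgeq.symm
  have hgp : ∀ x l, 0 < l → l ≤ (g x).toReal → l ≤ p x := by
    intro x l hl h
    have h1 : (g x).toReal ≤ (ENNReal.ofReal (p x)).toReal :=
      ENNReal.toReal_mono ENNReal.ofReal_ne_top (hgle x)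
    have h2 : l ≤ max (p x) 0 := by
      rw [ENNReal.toReal_ofReal'] at h1; exact h.trans h1
    rcases le_max_iff.1 h2 with h | h
    · exact h
    · linarith
  have hφm : Measurable (gaussPdf d) := by unfold gaussPdf; fun_prop
  have hφ0 : ∀ x, 0 < gaussPdf d x := fun x => by unfold gaussPdf; positivity
  -- key comparison
  have hkey : ∀ t : ℝ, gaussianCov d ((1 : ℝ≥0) : ℝ) {x | t ≤ gaussPdf d x} ≤
      μ {x | t ≤ gaussPdf d x} := by
    intro t
    rcases le_or_gt t 0 with ht | ht
    · have : {x : Ed d | t ≤ gaussPdf d x} = univ := by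
        ext x; simpa using ht.trans (hφ0 x).le
      rw [this, hμ, conv_apply _ _ _ _ MeasurableSet.univ, measure_univ]
      simp
    · obtain ⟨c, hc⟩ := level_eq d t ht
      rw [hc, hμ, conv_apply _ _ _ _ (measurableSet_le (by fun_prop) (by fun_prop))]
      calc _ = ∫⁻ y, gaussianCov d ((1 : ℝ≥0) : ℝ) {x | ‖x‖ ^ 2 ≤ c} ∂ν := by simp
        _ ≤ _ := by
          refine lintegral_mono_ae ?_
          filter_upwards [ae_norm d R ν hν] with y hy
          exact ball_comp d v hv R hlip y hy c
  -- nonnegative levels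
  have hnn : ∀ t : ℝ, 0 ≤ t →
      ∫⁻ l in Set.Ioi t, distFun (gaussPdf d) l ≤ ∫⁻ l in Set.Ioi t, distFun p l := by
    intro t ht
    have hA : MeasurableSet {x | t ≤ gaussPdf d x} := measurableSet_le (by fun_prop) hφm
    have h1 := layer d (gaussPdf d) hφm (fun x => (hφ0 x).le) _ hA t ht
    have h2 := layer d (fun x => (g x).toReal) hgm.ennreal_toReal (fun x => ENNReal.toReal_nonneg) _ hA t ht
    have hk := hkey t
    rw [cov_one, hμg, withDensity_apply _ hA, withDensity_apply _ hA] at hk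
    simp only [ENNReal.ofReal_toReal (hgtop _)] at h2
    rw [h1, h2] at hk
    have e1 : ∫⁻ l in Ioc 0 t, volume ({x | l ≤ gaussPdf d x} ∩ {x | t ≤ gaussPdf d x}) =
        ∫⁻ l in Ioc 0 t, volume {x | t ≤ gaussPdf d x} := by
      refine setLIntegral_congr_fun measurableSet_Ioc fun l hl => ?_
      congr 1
      ext x
      simp only [mem_inter_iff, mem_ofPred_eq, and_iff_right_iff_imp]
      exact fun h => hl.2.trans h
    have e2 : ∫⁻ l in Ioi t, volume ({x | l ≤ gaussPdf d x} ∩ {x | t ≤ gaussPdf d x}) =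
        ∫⁻ l in Ioi t, distFun (gaussPdf d) l := by
      refine setLIntegral_congr_fun measurableSet_Ioi fun l hl => ?_
      unfold distFun
      congr 1
      ext x
      simp only [mem_inter_iff, mem_ofPred_eq, and_iff_left_iff_imp]
      exact fun h => (le_of_lt hl).trans h
    have i1 : ∫⁻ l in Ioc 0 t, volume ({x | l ≤ (g x).toReal} ∩ {x | t ≤ gaussPdf d x}) ≤
        ∫⁻ l in Ioc 0 t, volume {x | t ≤ gaussPdf d x} :=
      lintegral_mono fun l => measure_mono inter_subset_right
    have i2 : ∫⁻ l in Ioi t, volume ({x | l ≤ (g x).toReal} ∩ {x | t ≤ gaussPdf d x}) ≤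
        ∫⁻ l in Ioi t, distFun p l := by
      refine setLIntegral_mono' measurableSet_Ioi fun l hl => ?_
      refine measure_mono fun x hx => ?_
      exact hgp x l (ht.trans_lt hl) hx.1
    have hfin : ∫⁻ l in Ioc 0 t, volume {x | t ≤ gaussPdf d x} ≠ ∞ := by
      have : ∫⁻ l in Ioc 0 t, volume {x | t ≤ gaussPdf d x} ≤
          gaussianCov d ((1 : ℝ≥0) : ℝ) {x | t ≤ gaussPdf d x} := by
        rw [cov_one, withDensity_apply _ hA, h1, e1]
        exact le_self_add
      exact (this.trans_lt (measure_lt_top _ _)).ne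
    rw [e1, e2] at hk
    exact (ENNReal.add_le_add_iff_left hfin).1 (hk.trans (add_le_add i1 i2))
  intro t
  rcases le_or_gt 0 t with ht | ht
  · exact hnn t ht
  · rw [← Ioc_union_Ioi_eq_Ioi ht.le, lintegral_union measurableSet_Ioi (Ioc_disjoint_Ioi le_rfl),
      lintegral_union measurableSet_Ioi (Ioc_disjoint_Ioi le_rfl)]
    refine add_le_add ?_ (hnn 0 le_rfl)
    refine setLIntegral_mono' measurableSet_Ioc fun l hl => ?_
    have hZ : MeasurableSet {x | g x = 0} := hgm (measurableSet_singleton 0)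
    have hz : volume {x | g x = 0} = 0 := by
      apply ac_conv d v ha ν _ hZ
      rw [← hμ, hμg, withDensity_apply _ hZ]
      exact setLIntegral_eq_zero hZ fun x hx => hx
    have hsub : {x | g x = 0}ᶜ ⊆ {x | l ≤ p x} := by
      intro x hx
      have : 0 < (g x).toReal := ENNReal.toReal_pos hx (hgtop x)
      exact hl.2.trans (this.le.trans (hgp x _ this le_rfl))
    calc distFun (gaussPdf d) l ≤ volume (univ : Set (Ed d)) := measure_mono (subset_univ _)
      _ = volume {x | g x = 0}ᶜ := (measure_eq_measure_of_null_sdiff (subset_univ _) (by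
          rw [← compl_eq_univ_sdiff, compl_compl]; exact hz)).symm
      _ ≤ distFun p l := measure_mono hsub
end
end

section
/- Let η, η′ be probability measures on ℝ^d, and let (η_k) and (η′_k) be sequences of probability measures converging in distribution to η and η′ respectively. Suppose that for every k there exists an L_k-Lipschitz map φ_k : ℝ^d → ℝ^d with (φ_k)_*η_k = η′_k, and that L := limsup_{k→∞} L_k < ∞. Then there exists an L-Lipschitz map φ : ℝ^d → ℝ^d with φ_*η = η′. -/
open MeasureTheory Real Set
open scoped ENNReal NNReal

noncomputable section

open Filter Topology in
lemma tight_aux {d : ℕ} (η : Measure (Ed d)) [IsProbabilityMeasure η] (ηk : ℕ → Measure (Ed d))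
    (hprob : ∀ k, IsProbabilityMeasure (ηk k))
    (hconv : ∀ f : BoundedContinuousFunction (Ed d) ℝ,
      Filter.Tendsto (fun k => ∫ x, f x ∂(ηk k)) Filter.atTop (nhds (∫ x, f x ∂η)))
    (ε : ℝ≥0∞) (hε : 0 < ε) :
    ∃ R : ℝ, ∀ᶠ k in atTop, ηk k (Metric.closedBall 0 R)ᶜ < ε := by
  have h1 := tendsto_measure_compl_closedBall_of_isTightMeasureSet
    (isTightMeasureSet_singleton (μ := η)) (0 : Ed d)
  simp only [Set.mem_singleton_iff, iSup_iSup_eq_left] at h1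
  obtain ⟨R, hR⟩ := (h1.eventually_lt_const hε).exists
  refine ⟨R + 1, ?_⟩
  let P : ProbabilityMeasure (Ed d) := ⟨η, inferInstance⟩
  let Pk : ℕ → ProbabilityMeasure (Ed d) := fun k => ⟨ηk k, hprob k⟩
  have hP : Tendsto Pk atTop (𝓝 P) :=
    ProbabilityMeasure.tendsto_iff_forall_integral_tendsto.2 hconv
  have h2 := ProbabilityMeasure.limsup_measure_closed_le_of_tendsto hP
    (F := (Metric.ball (0 : Ed d) (R + 1))ᶜ) Metric.isOpen_ball.isClosed_compl
  have h3 : η (Metric.ball (0 : Ed d) (R + 1))ᶜ ≤ η (Metric.closedBall 0 R)ᶜ :=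
    measure_mono (compl_subset_compl.2 (Metric.closedBall_subset_ball (by linarith)))
  have h4 := eventually_lt_of_limsup_lt (lt_of_le_of_lt h2 (lt_of_le_of_lt h3 hR))
  filter_upwards [h4] with k hk
  exact lt_of_le_of_lt
    (measure_mono (compl_subset_compl.2 Metric.ball_subset_closedBall)) hk

lemma integral_aux {d : ℕ} (μ : Measure (Ed d)) [IsProbabilityMeasure μ]
    (g : Ed d → ℝ) (M ε : ℝ) (hM : ∀ x, |g x| ≤ M) (hε : 0 ≤ ε)
    (K : Set (Ed d)) (hK : MeasurableSet K) (hg : ∀ x ∈ K, |g x| ≤ ε) :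
    |∫ x, g x ∂μ| ≤ ε + M * μ.real Kᶜ := by
  have hM0 : 0 ≤ M := (abs_nonneg _).trans (hM 0)
  have hi : Integrable (Kᶜ.indicator (fun _ => M)) μ :=
    (integrable_const M).indicator hK.compl
  have h := norm_integral_le_of_norm_le (μ := μ) (f := g)
    (g := fun x => ε + Kᶜ.indicator (fun _ => M) x) ((integrable_const ε).add hi)
    (Filter.Eventually.of_forall fun x => by
      by_cases hx : x ∈ K
      · simpa [hx] using hg x hx
      · have := hM x
        simp only [Set.mem_compl_iff, hx, not_false_eq_true, Set.indicator_of_mem, Real.norm_eq_abs]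
        linarith)
  rw [integral_add (integrable_const ε) hi, integral_indicator_const _ hK.compl] at h
  simpa [mul_comm] using h

/-- Stability of Lipschitz transport maps under weak convergence:
if `φ_k : (η_k → η'_k)` are `L_k`-Lipschitz transport maps, `η_k → η`, `η'_k → η'` in
distribution and `L = limsup L_k < ∞`, then there is an `L`-Lipschitz map pushing
`η` forward to `η'`. -/
theorem lipschitz_transport_limit
    (d : ℕ) (η η' : Measure (Ed d)) [IsProbabilityMeasure η] [IsProbabilityMeasure η']
    (ηk η'k : ℕ → Measure (Ed d))
    (hprob : ∀ k, IsProbabilityMeasure (ηk k)) (hprob' : ∀ k, IsProbabilityMeasure (η'k k))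
    (hconv : ∀ f : BoundedContinuousFunction (Ed d) ℝ,
      Filter.Tendsto (fun k => ∫ x, f x ∂(ηk k)) Filter.atTop (nhds (∫ x, f x ∂η)))
    (hconv' : ∀ f : BoundedContinuousFunction (Ed d) ℝ,
      Filter.Tendsto (fun k => ∫ x, f x ∂(η'k k)) Filter.atTop (nhds (∫ x, f x ∂η')))
    (L : ℕ → ℝ≥0) (φk : ℕ → Ed d → Ed d)
    (hφ : ∀ k, LipschitzWith (L k) (φk k) ∧ Measure.map (φk k) (ηk k) = η'k k)
    (Llim : ℝ≥0)
    (hL : Filter.limsup (fun k => (L k : ℝ≥0∞)) Filter.atTop = (Llim : ℝ≥0∞)) :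
    ∃ φ : Ed d → Ed d, LipschitzWith Llim φ ∧ Measure.map φ η = η' := by
  classical
  obtain ⟨U, hU⟩ := Ultrafilter.exists_le (Filter.atTop : Filter ℕ)
  have hLe : ∀ C : ℝ≥0, Llim < C → ∀ᶠ k in Filter.atTop, L k < C := by
    intro C hC
    have : Filter.limsup (fun k => (L k : ℝ≥0∞)) Filter.atTop < (C : ℝ≥0∞) := by
      rw [hL]; exact_mod_cast hC
    filter_upwards [Filter.eventually_lt_of_limsup_lt this] with k hk
    exact_mod_cast hk
  have hL1 := hLe (Llim + 1) (by simp)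
  -- bound on the images of the origin
  obtain ⟨R, hR⟩ := tight_aux η ηk hprob hconv (1/2) (by simp)
  obtain ⟨R', hR'⟩ := tight_aux η' η'k hprob' hconv' (1/2) (by simp)
  have hb : ∀ y : Ed d, ∀ᶠ k in Filter.atTop,
      φk k y ∈ Metric.closedBall (0 : Ed d) (R' + (Llim + 1) * (R + ‖y‖)) := by
    intro y
    filter_upwards [hL1, hR, hR'] with k h1 h2 h3
    have hc := (hφ k).1.continuous
    rw [← (hφ k).2, Measure.map_apply hc.measurable Metric.isClosed_closedBall.measurableSet.compl]
      at h3
    have hex : ∃ x : Ed d, x ∈ Metric.closedBall (0 : Ed d) R ∧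
        φk k x ∈ Metric.closedBall (0 : Ed d) R' := by
      by_contra hno
      push Not at hno
      have hsub : (Set.univ : Set (Ed d)) ⊆ (Metric.closedBall (0 : Ed d) R)ᶜ ∪
          φk k ⁻¹' (Metric.closedBall (0 : Ed d) R')ᶜ := by
        intro x _
        by_cases hx : x ∈ Metric.closedBall (0 : Ed d) R
        · exact Or.inr (hno x hx)
        · exact Or.inl hx
      have h5 := (measure_mono hsub).trans (measure_union_le (μ := ηk k) _ _)
      have := hprob k
      rw [measure_univ] at h5
      have h6 := lt_of_le_of_lt h5 (ENNReal.add_lt_add h2 h3)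
      rw [ENNReal.add_halves] at h6
      exact lt_irrefl _ h6
    obtain ⟨x, hx, hx'⟩ := hex
    rw [mem_closedBall_zero_iff] at hx hx' ⊢
    have h7 := (hφ k).1.dist_le_mul y x
    rw [dist_eq_norm, dist_eq_norm] at h7
    have h8 : ‖y - x‖ ≤ R + ‖y‖ := (norm_sub_le _ _).trans (by linarith)
    have h9 : (L k : ℝ) ≤ Llim + 1 := by exact_mod_cast h1.le
    have h10 : (L k : ℝ) * ‖y - x‖ ≤ (Llim + 1) * (R + ‖y‖) :=
      mul_le_mul h9 h8 (norm_nonneg _) (by positivity)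
    have h11 : ‖φk k y‖ ≤ ‖φk k y - φk k x‖ + ‖φk k x‖ := by
      simpa using norm_add_le (φk k y - φk k x) (φk k x)
    linarith
  have hlim : ∀ y : Ed d, ∃ z : Ed d, Filter.Tendsto (fun k => φk k y) U (nhds z) := by
    intro y
    obtain ⟨z, -, hz⟩ := (isCompact_closedBall (0 : Ed d)
      (R' + (Llim + 1) * (R + ‖y‖))).ultrafilter_le_nhds (U.map (fun k => φk k y))
        (by
          rw [Ultrafilter.coe_map, Filter.le_principal_iff, Filter.mem_map]
          exact hU (hb y))
    exact ⟨z, hz⟩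
  choose φ hφlim using hlim
  have hLip : LipschitzWith Llim φ := by
    refine LipschitzWith.of_dist_le_mul fun x y => ?_
    refine le_of_forall_pos_le_add fun ε hε => ?_
    obtain ⟨δ, hδ, hδε⟩ : ∃ δ : ℝ≥0, 0 < δ ∧ (δ : ℝ) * dist x y ≤ ε := by
      have hq : 0 < ε / (dist x y + 1) := by positivity
      refine ⟨(ε / (dist x y + 1)).toNNReal, Real.toNNReal_pos.2 hq, ?_⟩
      · rw [Real.coe_toNNReal _ hq.le, div_mul_eq_mul_div, div_le_iff₀ (by positivity)]
        nlinarith [dist_nonneg (x := x) (y := y)]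
    have ht := (hφlim x).dist (hφlim y)
    refine le_of_tendsto ht ?_
    filter_upwards [hU (hLe (Llim + δ) (by simpa using hδ))] with k hk
    have h1 : (L k : ℝ) ≤ Llim + δ := by exact_mod_cast hk.le
    have h2 := (hφ k).1.dist_le_mul x y
    nlinarith [dist_nonneg (x := x) (y := y)]
  refine ⟨φ, hLip, ?_⟩
  have hloc : TendstoLocallyUniformly φk φ U := by
    rw [Metric.tendstoLocallyUniformly_iff]
    intro ε hε x
    refine ⟨Metric.ball x (ε / (3 * (Llim + 1))), Metric.ball_mem_nhds _ (by positivity), ?_⟩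
    filter_upwards [hU hL1, (hφlim x).eventually (Metric.ball_mem_nhds _ (by positivity : 0 < ε / 3))]
      with k h1 h2 y hy
    have h9 : (L k : ℝ) ≤ Llim + 1 := by exact_mod_cast h1.le
    have h3 := (hφ k).1.dist_le_mul x y
    have h4 := hLip.dist_le_mul y x
    have hy : dist y x < ε / (3 * (Llim + 1)) := hy
    rw [lt_div_iff₀ (by positivity)] at hy
    have h2 : dist (φk k x) (φ x) < ε / 3 := h2
    have h5 := dist_triangle4 (φ y) (φ x) (φk k x) (φk k y)
    rw [dist_comm (φ x)] at h5
    rw [dist_comm x y] at h3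
    nlinarith [dist_nonneg (x := y) (y := x)]
  let Φ : C(Ed d, Ed d) := ⟨φ, hLip.continuous⟩
  let Φk : ℕ → C(Ed d, Ed d) := fun k => ⟨φk k, (hφ k).1.continuous⟩
  have hΦ : Filter.Tendsto Φk U (nhds Φ) :=
    ContinuousMap.tendsto_of_tendstoLocallyUniformly hloc
  have : IsProbabilityMeasure (Measure.map φ η) :=
    Measure.isProbabilityMeasure_map hLip.continuous.aemeasurable
  refine ext_of_forall_integral_eq_of_IsFiniteMeasure fun f => ?_
  rw [integral_map hLip.continuous.aemeasurable f.continuous.aestronglyMeasurable]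
  have hA : Filter.Tendsto (fun k => ∫ x, f (φ x) ∂(ηk k)) U (nhds (∫ x, f (φ x) ∂η)) :=
    (hconv (f.compContinuous Φ)).mono_left hU
  have hB : Filter.Tendsto (fun k => ∫ x, f (φk k x) ∂(ηk k)) U (nhds (∫ x, f x ∂η')) := by
    refine ((hconv' f).mono_left hU).congr fun k => ?_
    rw [← (hφ k).2, integral_map (hφ k).1.continuous.aemeasurable
      f.continuous.aestronglyMeasurable]
  have hunif := ContinuousMap.tendsto_iff_forall_isCompact_tendstoUniformlyOn.1
    (((ContinuousMap.continuous_postcomp f.toContinuousMap).tendsto Φ).comp hΦ)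
  have hD : Filter.Tendsto (fun k => ∫ x, f (φk k x) ∂(ηk k) - ∫ x, f (φ x) ∂(ηk k)) U
      (nhds 0) := by
    rw [Metric.tendsto_nhds]
    intro ε hε
    have hp : 0 < ε / (4 * (2 * ‖f‖ + 1)) := by positivity
    obtain ⟨r, hr⟩ := tight_aux η ηk hprob hconv (ENNReal.ofReal (ε / (4 * (2 * ‖f‖ + 1))))
      (by simpa using hp)
    have hu := Metric.tendstoUniformlyOn_iff.1
      (hunif (Metric.closedBall 0 r) (isCompact_closedBall _ _)) (ε / 2) (by positivity)
    filter_upwards [hU hr, hu] with k h1 h2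
    have := hprob k
    have hi1 : Integrable (fun x => f (φk k x)) (ηk k) :=
      (f.compContinuous (Φk k)).integrable (ηk k)
    have hi2 : Integrable (fun x => f (φ x)) (ηk k) :=
      (f.compContinuous Φ).integrable (ηk k)
    rw [← integral_sub hi1 hi2, dist_zero_right, Real.norm_eq_abs]
    have h3 := integral_aux (ηk k) (fun x => f (φk k x) - f (φ x)) (2 * ‖f‖) (ε / 2)
      (fun x => by
        rw [← Real.norm_eq_abs]
        have := norm_sub_le (f (φk k x)) (f (φ x))
        have := f.norm_coe_le_norm (φk k x)
        have := f.norm_coe_le_norm (φ x)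
        linarith) (by positivity) (Metric.closedBall 0 r)
      Metric.isClosed_closedBall.measurableSet
      (fun x hx => by
        have := h2 x hx
        rw [dist_comm, Real.dist_eq] at this
        exact this.le)
    have h4 : (ηk k).real (Metric.closedBall (0 : Ed d) r)ᶜ < ε / (4 * (2 * ‖f‖ + 1)) := by
      rw [Measure.real]
      exact (ENNReal.lt_ofReal_iff_toReal_lt (measure_ne_top _ _)).1 h1
    rw [lt_div_iff₀ (by positivity)] at h4
    have h5 : 0 ≤ (ηk k).real (Metric.closedBall (0 : Ed d) r)ᶜ := measureReal_nonneg
    nlinarith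
  have hE := hB.sub hA
  have := tendsto_nhds_unique hE hD
  linarith
end
end

section
/- Let ν be a probability measure on ℝ^d whose support is contained in a ball of radius R, let μ = γ_d ⋆ ν, and let f = dμ/dγ_d be its density with respect to the standard Gaussian. Then for every t ≥ 0 and every x ∈ ℝ^d, ∇² log Q_t f(x) ⪯ e^{−2t}·R²·Id_d. -/
open MeasureTheory Real Set
open scoped ENNReal NNReal

noncomputable section

open Filter Topology ProbabilityTheory in
lemma hasFDerivAt_of_graph {d : ℕ} {L l : Ed d → ℝ}
    (hg : ∀ y, ∃ u : ℕ → Ed d, Tendsto u atTop (𝓝 y) ∧ Tendsto (fun n => L (u n)) atTop (𝓝 (l y)))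
    {D : Ed d →L[ℝ] ℝ} {y : Ed d} (h : HasFDerivAt L D y) : HasFDerivAt l D y := by
  have hy : L y = l y := by
    obtain ⟨u, hu, hLu⟩ := hg y
    exact tendsto_nhds_unique (h.continuousAt.tendsto.comp hu) hLu
  rw [hasFDerivAt_iff_isLittleO, Asymptotics.isLittleO_iff] at h ⊢
  intro c hc
  filter_upwards [eventually_eventually_nhds.2 (h hc)] with y' hy'
  obtain ⟨u, hu, hLu⟩ := hg y'
  rw [← hy]
  refine le_of_tendsto_of_tendsto (b := atTop) (f := fun n => ‖L (u n) - L y - D (u n - y)‖)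
    (g := fun n => c * ‖u n - y‖) ?_ ?_ (hu.eventually hy')
  · exact ((hLu.sub_const _).sub ((D.continuous.tendsto _).comp (hu.sub_const y))).norm
  · exact ((hu.sub_const y).norm).const_mul c

open Filter Topology ProbabilityTheory in
lemma deriv_le_of_mix {k ψ : ℝ → ℝ} {c k' B : ℝ} (hB : 0 ≤ B) (hcB : c ≤ B)
    (hψ : HasDerivAt ψ c 0) (hk : HasDerivAt k k' 0) (hmix : ∀ s, k s = ψ s ∨ k s = 0) :
    k' ≤ B := by
  have aux : ∀ (φ : ℝ → ℝ) (e : ℝ), HasDerivAt φ e 0 → (∃ᶠ s in 𝓝[≠] (0:ℝ), k s = φ s) →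
      k' = e := by
    intro φ e hφ hfr
    have hk0 : k 0 = φ 0 := by
      have h1 : Tendsto (fun s => k s - φ s) (𝓝[≠] (0:ℝ)) (𝓝 (k 0 - φ 0)) :=
        ((hk.continuousAt.tendsto).sub (hφ.continuousAt.tendsto)).mono_left nhdsWithin_le_nhds
      have h2 : k 0 - φ 0 = 0 := by
        by_contra hne
        have := h1.eventually_ne hne
        obtain ⟨s, hs1, hs2⟩ := (hfr.and_eventually this).exists
        exact hs2 (by rw [hs1]; ring)
      linarith
    have h1 := (hasDerivAt_iff_tendsto_slope.1 hk).sub (hasDerivAt_iff_tendsto_slope.1 hφ)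
    by_contra hne
    have := h1.eventually_ne (sub_ne_zero.2 hne)
    obtain ⟨s, hs1, hs2⟩ := (hfr.and_eventually this).exists
    exact hs2 (by simp [slope, hs1, hk0])
  by_cases hfr : ∃ᶠ s in 𝓝[≠] (0:ℝ), k s = ψ s
  · exact (aux ψ c hψ hfr).le.trans hcB
  · have : k' = 0 := by
      refine aux (fun _ => 0) 0 (hasDerivAt_const _ _) ?_
      refine Eventually.frequently ?_
      rw [not_frequently] at hfr
      filter_upwards [hfr] with s hs
      exact (hmix s).resolve_left hs
    rw [this]; exact hB

lemma ae_norm_le {d : ℕ} {R : ℝ} {ν : Measure (Ed d)}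
    (hν : msupport ν ⊆ Metric.closedBall 0 R) : ∀ᵐ z ∂ν, ‖z‖ ≤ R := by
  rw [ae_iff]
  refine measure_null_of_locally_null _ fun z hz => ?_
  have : z ∉ msupport ν := fun h => hz (by simpa using hν h)
  simp only [msupport, mem_ofPred_eq, not_forall, not_not] at this
  obtain ⟨U, hU, hzU, h0⟩ := this
  exact ⟨U, mem_nhdsWithin_of_mem_nhds (hU.mem_nhds hzU), h0⟩

/-- The evolved density. -/
def Gt {d : ℕ} (ν : Measure (Ed d)) (a : ℝ) (x : Ed d) : ℝ :=
  ∫ z, Real.exp (a * inner ℝ x z - a ^ 2 * ‖z‖ ^ 2 / 2) ∂ν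

lemma exp_bound {d : ℕ} {R : ℝ} (a : ℝ) (x z : Ed d) (hz : ‖z‖ ≤ R) :
    ‖Real.exp (a * inner ℝ x z - a ^ 2 * ‖z‖ ^ 2 / 2)‖ ≤ Real.exp (|a| * (‖x‖ * R)) := by
  rw [Real.norm_of_nonneg (Real.exp_pos _).le, Real.exp_le_exp]
  have h1 : a * inner ℝ x z ≤ |a| * (‖x‖ * R) := by
    calc a * inner ℝ x z ≤ |a * inner ℝ x z| := le_abs_self _
      _ = |a| * |inner ℝ x z| := abs_mul _ _
      _ ≤ |a| * (‖x‖ * ‖z‖) := by gcongr; exact abs_real_inner_le_norm x z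
      _ ≤ _ := by gcongr
  have : 0 ≤ a ^ 2 * ‖z‖ ^ 2 / 2 := by positivity
  linarith

lemma Gt_integrable {d : ℕ} {R : ℝ} {ν : Measure (Ed d)} [IsProbabilityMeasure ν]
    (hR : ∀ᵐ z ∂ν, ‖z‖ ≤ R) (a : ℝ) (x : Ed d) :
    Integrable (fun z => Real.exp (a * inner ℝ x z - a ^ 2 * ‖z‖ ^ 2 / 2)) ν := by
  refine Integrable.of_bound (C := Real.exp (|a| * (‖x‖ * R))) ?_ ?_
  · exact Continuous.aestronglyMeasurable (by fun_prop)
  · filter_upwards [hR] with z hz using exp_bound a x z hz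

lemma Gt_pos {d : ℕ} {R : ℝ} {ν : Measure (Ed d)} [IsProbabilityMeasure ν]
    (hR : ∀ᵐ z ∂ν, ‖z‖ ≤ R) (a : ℝ) (x : Ed d) : 0 < Gt ν a x :=
  integral_exp_pos (Gt_integrable hR a x)

open Filter Topology in
lemma Gt_continuous {d : ℕ} {R : ℝ} {ν : Measure (Ed d)} [IsProbabilityMeasure ν]
    (hR : ∀ᵐ z ∂ν, ‖z‖ ≤ R) (a : ℝ) : Continuous (Gt ν a) := by
  rw [continuous_iff_continuousAt]
  intro x0
  refine continuousAt_of_dominated (bound := fun _ => Real.exp (|a| * ((‖x0‖ + 1) * R))) ?_ ?_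
    (integrable_const _) ?_
  · exact Eventually.of_forall fun x => Continuous.aestronglyMeasurable (by fun_prop)
  · have : ∀ᶠ x in 𝓝 x0, ‖x‖ < ‖x0‖ + 1 :=
      continuous_norm.continuousAt.eventually_lt continuousAt_const (by simp)
    filter_upwards [this] with x hx
    filter_upwards [hR] with z hz
    refine (exp_bound a x z hz).trans (Real.exp_le_exp.2 ?_)
    have : 0 ≤ R := (norm_nonneg z).trans hz
    gcongr
  · exact ae_of_all _ fun z => Continuous.continuousAt (by fun_prop)

open Filter Topology ProbabilityTheory in
lemma log_Gt_line {d : ℕ} {R : ℝ} {ν : Measure (Ed d)} [IsProbabilityMeasure ν]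
    (hR : ∀ᵐ z ∂ν, ‖z‖ ≤ R) (a : ℝ) (x w : Ed d) :
    ∃ ψ : ℝ → ℝ, ∃ c : ℝ, (∀ s, HasDerivAt (fun s : ℝ => Real.log (Gt ν a (x + s • w))) (ψ s) s) ∧
      HasDerivAt ψ c 0 ∧ c ≤ a ^ 2 * R ^ 2 * ‖w‖ ^ 2 := by
  let q : Ed d → ℝ := fun z => Real.exp (a * inner ℝ x z - a ^ 2 * ‖z‖ ^ 2 / 2)
  have hq : Integrable q ν := Gt_integrable hR a x
  have hqm : Measurable q := by
    have : Continuous q := by fun_prop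
    exact this.measurable
  let μ : Measure (Ed d) := ν.withDensity fun z => ENNReal.ofReal (q z)
  have hμac : μ ≪ ν := withDensity_absolutelyContinuous _ _
  have : IsFiniteMeasure μ := isFiniteMeasure_withDensity_ofReal hq.2
  have : NeZero μ := ⟨by
    intro h
    have h1 := (withDensity_eq_zero_iff hqm.ennreal_ofReal.aemeasurable).1 h
    obtain ⟨z, hz⟩ := h1.exists
    simp only [Pi.zero_apply, ENNReal.ofReal_eq_zero] at hz
    exact absurd (Real.exp_pos (a * inner ℝ x z - a ^ 2 * ‖z‖ ^ 2 / 2)) (not_lt.2 hz)⟩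
  let X : Ed d → ℝ := fun z => a * inner ℝ w z
  have hXm : Measurable X := by
    have : Continuous X := by fun_prop
    exact this.measurable
  have hXb : ∀ᵐ z ∂μ, X z ∈ Set.Icc (-(|a| * (‖w‖ * R))) (|a| * (‖w‖ * R)) := by
    filter_upwards [hμac hR] with z hz
    rw [Set.mem_Icc, ← abs_le]
    calc |a * inner ℝ w z| = |a| * |inner ℝ w z| := abs_mul _ _
      _ ≤ |a| * (‖w‖ * ‖z‖) := by gcongr; exact abs_real_inner_le_norm w z
      _ ≤ _ := by gcongr
  have hint : ∀ s : ℝ, Integrable (fun z => Real.exp (s * X z)) μ := fun s =>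
    integrable_exp_mul_of_mem_Icc hXm.aemeasurable hXb
  have hset : integrableExpSet X μ = Set.univ := by
    ext s; simpa [integrableExpSet] using hint s
  have hmem : ∀ s, s ∈ interior (integrableExpSet X μ) := by simp [hset]
  have hφ : (fun s : ℝ => Real.log (Gt ν a (x + s • w))) = cgf X μ := by
    funext s
    simp only [cgf, mgf, Gt, μ]
    congr 1
    rw [integral_withDensity_eq_integral_toReal_smul hqm.ennreal_ofReal
      (ae_of_all _ fun _ => ENNReal.ofReal_lt_top)]
    refine integral_congr_ae (ae_of_all _ fun z => ?_)
    simp only [q, X, smul_eq_mul, ENNReal.toReal_ofReal (Real.exp_pos _).le]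
    rw [← Real.exp_add, inner_add_left, real_inner_smul_left]
    congr 1; ring
  rw [hφ]
  refine ⟨deriv (cgf X μ), iteratedDeriv 2 (cgf X μ) 0, fun s => ?_, ?_, ?_⟩
  · exact (analyticAt_cgf (hmem s)).differentiableAt.hasDerivAt
  · rw [iteratedDeriv_succ, iteratedDeriv_one]
    exact (analyticAt_cgf (hmem 0)).deriv.differentiableAt.hasDerivAt
  · rw [← variance_tilted_mul (hmem 0)]
    have := isProbabilityMeasure_tilted (hint 0)
    have hac := tilted_absolutelyContinuous μ (fun z => 0 * X z)
    refine (variance_le_sq_of_bounded (hac hXb) hXm.aemeasurable).trans (le_of_eq ?_)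
    rw [← sq_abs a]; ring

open Filter Topology ProbabilityTheory in
lemma hess_le {d : ℕ} {R : ℝ} {ν : Measure (Ed d)} [IsProbabilityMeasure ν]
    (hR : ∀ᵐ z ∂ν, ‖z‖ ≤ R) (a : ℝ) (L : Ed d → ℝ)
    (hg : ∀ y, ∃ u : ℕ → Ed d, Tendsto u atTop (𝓝 y) ∧
      Tendsto (fun n => L (u n)) atTop (𝓝 (Real.log (Gt ν a y)))) (x w : Ed d) :
    hessQF L x w ≤ a ^ 2 * R ^ 2 * ‖w‖ ^ 2 := by
  have hB : 0 ≤ a ^ 2 * R ^ 2 * ‖w‖ ^ 2 := by positivity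
  unfold hessQF
  by_cases hd : DifferentiableAt ℝ (fun y => fderiv ℝ L y w) x
  swap
  · rw [fderiv_zero_of_not_differentiableAt hd]; simpa using hB
  obtain ⟨ψ, c, h1, h2, h3⟩ := log_Gt_line hR a x w
  have hline : ∀ s : ℝ, HasDerivAt (fun s : ℝ => x + s • w) w s := fun s => by
    simpa using ((hasDerivAt_id s).smul_const w).const_add x
  refine deriv_le_of_mix (k := fun s : ℝ => fderiv ℝ L (x + s • w) w) hB h3 h2 ?_ ?_
  · have hd' : HasFDerivAt (fun y => fderiv ℝ L y w)
      (fderiv ℝ (fun y => fderiv ℝ L y w) x) (x + (0:ℝ) • w) := by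
      simpa using hd.hasFDerivAt
    exact hd'.comp_hasDerivAt (0:ℝ) (hline 0)
  · intro s
    by_cases hL : DifferentiableAt ℝ L (x + s • w)
    · left
      have := hasFDerivAt_of_graph (l := fun y => Real.log (Gt ν a y)) hg hL.hasFDerivAt
      have h5 := this.comp_hasDerivAt s (hline s)
      exact h5.unique (h1 s)
    · right
      simp [fderiv_zero_of_not_differentiableAt hL]

lemma gauss_dens_meas (d : ℕ) : Measurable fun x : Ed d =>
    ENNReal.ofReal ((2 * π) ^ (-(d : ℝ) / 2) * Real.exp (-‖x‖ ^ 2 / 2)) := by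
  have : Continuous fun x : Ed d => (2 * π) ^ (-(d : ℝ) / 2) * Real.exp (-‖x‖ ^ 2 / 2) := by
    fun_prop
  exact this.measurable.ennreal_ofReal

lemma gauss_prob (d : ℕ) : IsProbabilityMeasure (stdGaussian d) := by
  constructor
  have h := GaussianFourier.integral_rexp_neg_mul_sq_norm (V := Ed d) (b := 1 / 2) (by norm_num)
  have hpos : 0 < (2 * π) ^ ((d : ℝ) / 2) := Real.rpow_pos_of_pos (by positivity) _
  have h' : ∫ v : Ed d, Real.exp (-‖v‖ ^ 2 / 2) = (2 * π) ^ ((d : ℝ) / 2) := by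
    have e : (fun v : Ed d => Real.exp (-‖v‖ ^ 2 / 2))
        = fun v : Ed d => Real.exp (-(1 / 2) * ‖v‖ ^ 2) := by
      funext v; congr 1; ring
    rw [e, h]
    congr 1
    · field_simp
    · simp
  have hi : Integrable (fun v : Ed d => Real.exp (-‖v‖ ^ 2 / 2)) := by
    by_contra hni
    rw [integral_undef hni] at h'
    exact hpos.ne h'
  rw [stdGaussian, withDensity_apply _ MeasurableSet.univ, Measure.restrict_univ,
    ← ofReal_integral_eq_lintegral_ofReal (hi.const_mul _) (ae_of_all _ fun v => by positivity),
    integral_const_mul, h', ← Real.rpow_add (by positivity)]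
  ring_nf
  simp

lemma gauss_ac (d : ℕ) : stdGaussian d ≪ volume := withDensity_absolutelyContinuous _ _

lemma ac_gauss (d : ℕ) : volume ≪ stdGaussian d := by
  refine withDensity_absolutelyContinuous' (gauss_dens_meas d).aemeasurable (ae_of_all _ fun x => ?_)
  simp only [ne_eq, ENNReal.ofReal_eq_zero, not_le]
  positivity

lemma gauss_shift {d : ℕ} (z : Ed d) {φ : Ed d → ℝ≥0∞} (hφ : Measurable φ) :
    ∫⁻ y, φ (y + z) ∂(stdGaussian d)
      = ∫⁻ y, φ y * ENNReal.ofReal (Real.exp (inner ℝ y z - ‖z‖ ^ 2 / 2)) ∂(stdGaussian d) := by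
  have hm : Measurable fun y : Ed d =>
      ENNReal.ofReal (Real.exp (inner ℝ y z - ‖z‖ ^ 2 / 2)) := by
    have : Continuous fun y : Ed d => Real.exp (inner ℝ y z - ‖z‖ ^ 2 / 2) := by fun_prop
    exact this.measurable.ennreal_ofReal
  have hφm : Measurable fun y : Ed d =>
      φ y * ENNReal.ofReal (Real.exp (inner ℝ y z - ‖z‖ ^ 2 / 2)) := hφ.mul hm
  have hφz : Measurable fun y : Ed d => φ (y + z) := hφ.comp (measurable_add_const z)
  rw [stdGaussian, lintegral_withDensity_eq_lintegral_mul _ (gauss_dens_meas d)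
    hφz, lintegral_withDensity_eq_lintegral_mul _
    (gauss_dens_meas d) hφm]
  conv_rhs => rw [← lintegral_add_right_eq_self (μ := (volume : Measure (Ed d))) _ z]
  refine lintegral_congr fun y => ?_
  simp only [Pi.mul_apply]
  rw [mul_comm (φ _), ← mul_assoc]
  congr 1
  rw [← ENNReal.ofReal_mul (by positivity), mul_assoc, ← Real.exp_add]
  congr 3
  rw [norm_add_sq_real, inner_add_left, real_inner_self_eq_norm_sq]
  ring

lemma gauss_laplace {d : ℕ} (z : Ed d) :
    ∫⁻ y, ENNReal.ofReal (Real.exp (inner ℝ y z - ‖z‖ ^ 2 / 2)) ∂(stdGaussian d) = 1 := by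
  have := gauss_prob d
  have h := gauss_shift z (φ := fun _ => 1) measurable_const
  simpa using h.symm

lemma Gt_ofReal {d : ℕ} {R : ℝ} {ν : Measure (Ed d)} [IsProbabilityMeasure ν]
    (hR : ∀ᵐ z ∂ν, ‖z‖ ≤ R) (a : ℝ) (x : Ed d) : ENNReal.ofReal (Gt ν a x) =
      ∫⁻ z, ENNReal.ofReal (Real.exp (a * inner ℝ x z - a ^ 2 * ‖z‖ ^ 2 / 2)) ∂ν :=
  ofReal_integral_eq_lintegral_ofReal (Gt_integrable hR a x)
    (ae_of_all _ fun _ => (Real.exp_pos _).le)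

lemma mconv_eq {d : ℕ} {R : ℝ} {ν : Measure (Ed d)} [IsProbabilityMeasure ν]
    (hR : ∀ᵐ z ∂ν, ‖z‖ ≤ R) : mconv (stdGaussian d) ν
      = (stdGaussian d).withDensity fun x => ENNReal.ofReal (Gt ν 1 x) := by
  have := gauss_prob d
  ext A hA
  have hind : Measurable (A.indicator (fun _ => (1 : ℝ≥0∞))) := measurable_const.indicator hA
  have hadd : Measurable fun p : Ed d × Ed d => p.1 + p.2 := measurable_fst.add measurable_snd
  have hm : Measurable fun p : Ed d × Ed d =>
      ENNReal.ofReal (Real.exp (inner ℝ p.2 p.1 - ‖p.1‖ ^ 2 / 2)) := by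
    have : Continuous fun p : Ed d × Ed d =>
      Real.exp (inner ℝ p.2 p.1 - ‖p.1‖ ^ 2 / 2) := by fun_prop
    exact this.measurable.ennreal_ofReal
  calc mconv (stdGaussian d) ν A
      = ∫⁻ p, A.indicator (fun _ => (1 : ℝ≥0∞)) p ∂(mconv (stdGaussian d) ν) := by
        rw [lintegral_indicator_const hA, one_mul]
    _ = ∫⁻ z, ∫⁻ y, A.indicator (fun _ => (1 : ℝ≥0∞)) (y + z) ∂(stdGaussian d) ∂ν := by
        rw [mconv, lintegral_map hind hadd]
        exact lintegral_prod_symm _ (hind.comp hadd).aemeasurable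
    _ = ∫⁻ z, ∫⁻ y, A.indicator (fun _ => (1 : ℝ≥0∞)) y *
          ENNReal.ofReal (Real.exp (inner ℝ y z - ‖z‖ ^ 2 / 2)) ∂(stdGaussian d) ∂ν :=
        lintegral_congr fun z => gauss_shift z hind
    _ = ∫⁻ y, ∫⁻ z, A.indicator (fun _ => (1 : ℝ≥0∞)) y *
          ENNReal.ofReal (Real.exp (inner ℝ y z - ‖z‖ ^ 2 / 2)) ∂ν ∂(stdGaussian d) := by
        refine lintegral_lintegral_swap ?_
        exact ((hind.comp measurable_snd).mul hm).aemeasurable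
    _ = ∫⁻ y, A.indicator (fun y => ENNReal.ofReal (Gt ν 1 y)) y ∂(stdGaussian d) := by
        refine lintegral_congr fun y => ?_
        by_cases hy : y ∈ A
        · simp only [Set.indicator_of_mem hy, one_mul, Gt_ofReal hR, one_pow]
        · simp [Set.indicator_of_notMem hy]
    _ = _ := by rw [withDensity_apply _ hA, lintegral_indicator hA]

lemma OU_Gt {d : ℕ} {R : ℝ} {ν : Measure (Ed d)} [IsProbabilityMeasure ν]
    (hR : ∀ᵐ z ∂ν, ‖z‖ ≤ R) (t : ℝ) (ht : 0 ≤ t) (x : Ed d) :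
    OU t (Gt ν 1) x = Gt ν (Real.exp (-t)) x := by
  have := gauss_prob d
  set a := Real.exp (-t) with ha
  set s := Real.sqrt (1 - Real.exp (-2 * t)) with hs
  have hs2 : s ^ 2 = 1 - a ^ 2 := by
    rw [hs, Real.sq_sqrt, ha, ← Real.exp_nat_mul]
    · congr 2; push_cast; ring
    · have : Real.exp (-2 * t) ≤ 1 := Real.exp_le_one_iff.2 (by linarith)
      linarith
  have hc : Continuous fun y : Ed d => Gt ν 1 (a • x + s • y) :=
    (Gt_continuous hR 1).comp (by fun_prop)
  have h1 : OU t (Gt ν 1) x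
      = (∫⁻ y, ENNReal.ofReal (Gt ν 1 (a • x + s • y)) ∂(stdGaussian d)).toReal :=
    integral_eq_lintegral_of_nonneg_ae (ae_of_all _ fun y => (Gt_pos hR 1 _).le)
      hc.aestronglyMeasurable
  have hm : Measurable fun p : Ed d × Ed d => ENNReal.ofReal (Real.exp
      (1 * inner ℝ (a • x + s • p.1) p.2 - 1 ^ 2 * ‖p.2‖ ^ 2 / 2)) := by
    have : Continuous fun p : Ed d × Ed d => Real.exp
      (1 * inner ℝ (a • x + s • p.1) p.2 - 1 ^ 2 * ‖p.2‖ ^ 2 / 2) := by fun_prop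
    exact this.measurable.ennreal_ofReal
  rw [h1]
  have h2 : ∫⁻ y, ENNReal.ofReal (Gt ν 1 (a • x + s • y)) ∂(stdGaussian d)
      = ENNReal.ofReal (Gt ν a x) := by
    simp_rw [Gt_ofReal hR]
    rw [lintegral_lintegral_swap hm.aemeasurable]
    refine lintegral_congr fun z => ?_
    calc _ = ∫⁻ y, ENNReal.ofReal (Real.exp (a * inner ℝ x z - a ^ 2 * ‖z‖ ^ 2 / 2)) *
          ENNReal.ofReal (Real.exp (inner ℝ y (s • z) - ‖s • z‖ ^ 2 / 2)) ∂(stdGaussian d) := by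
          refine lintegral_congr fun y => ?_
          rw [← ENNReal.ofReal_mul (by positivity), ← Real.exp_add]
          congr 2
          rw [inner_add_left, real_inner_smul_left, real_inner_smul_left, real_inner_smul_right,
            norm_smul, mul_pow, Real.norm_eq_abs, sq_abs, hs2]
          ring
      _ = _ := by
          rw [lintegral_const_mul' _ _ ENNReal.ofReal_ne_top, gauss_laplace, mul_one]
  rw [h2, ENNReal.toReal_ofReal (Gt_pos hR a x).le]

open Filter Topology in
lemma graph_zero {d : ℕ} {R : ℝ} {ν : Measure (Ed d)} [IsProbabilityMeasure ν]
    (hR : ∀ᵐ z ∂ν, ‖z‖ ≤ R) (f : Ed d → ℝ)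
    (hf : mconv (stdGaussian d) ν
      = (stdGaussian d).withDensity fun x => ENNReal.ofReal (f x)) (y : Ed d)
    (ε : ℝ) (hε : 0 < ε) : ∃ y', dist y' y < ε ∧ |f y' - Gt ν 1 y| < ε := by
  have := gauss_prob d
  have hgm : Measurable fun x => ENNReal.ofReal (Gt ν 1 x) :=
    (Gt_continuous hR 1).measurable.ennreal_ofReal
  rw [mconv_eq hR] at hf
  have hge : ∀ᵐ x ∂(stdGaussian d), Gt ν 1 x ≤ f x := by
    obtain ⟨F, hFm, hFle, hFeq⟩ := exists_measurable_le_withDensity_eq (μ := stdGaussian d)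
      (fun x => ENNReal.ofReal (f x))
    rw [← hf, withDensity_eq_iff_of_sigmaFinite hFm.aemeasurable hgm.aemeasurable] at hFeq
    filter_upwards [hFeq] with x hx
    have h1 := hFle x
    rw [hx] at h1
    exact (ENNReal.ofReal_le_ofReal_iff' .. |>.1 h1).resolve_right (not_le.2 (Gt_pos hR 1 x))
  by_contra! hcon
  obtain ⟨δ, hδ, hball⟩ := Metric.continuous_iff.1 (Gt_continuous hR 1) y (ε / 2) (by positivity)
  set U := Metric.ball y (min δ ε) with hU
  have hUm : MeasurableSet U := measurableSet_ball
  have hfU : ∀ᵐ x ∂((stdGaussian d).restrict U),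
      ENNReal.ofReal (Gt ν 1 x) + ENNReal.ofReal (ε / 2) ≤ ENNReal.ofReal (f x) := by
    rw [ae_restrict_iff' hUm]
    filter_upwards [hge] with x hx hxU
    rw [← ENNReal.ofReal_add (Gt_pos hR 1 x).le (by positivity)]
    apply ENNReal.ofReal_le_ofReal
    have hd : dist x y < min δ ε := hxU
    have h1 := hcon x (hd.trans_le (min_le_right _ _))
    have h2 := hball x (hd.trans_le (min_le_left _ _))
    rw [Real.dist_eq, abs_lt] at h2
    rcases le_abs.1 h1 with h | h <;> linarith
  have h1 := lintegral_mono_ae hfU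
  rw [lintegral_add_right _ measurable_const, lintegral_const, Measure.restrict_apply_univ,
    ← withDensity_apply _ hUm, ← withDensity_apply _ hUm, ← hf] at h1
  have hfin : (stdGaussian d).withDensity (fun x => ENNReal.ofReal (Gt ν 1 x)) U ≠ ∞ := by
    rw [← mconv_eq hR]
    unfold mconv
    exact measure_ne_top _ _
  have h2 : ENNReal.ofReal (ε / 2) * stdGaussian d U = 0 := by
    by_contra hne
    exact absurd h1 (not_le.2 (ENNReal.lt_add_right hfin hne))
  rcases mul_eq_zero.1 h2 with h | h
  · rw [ENNReal.ofReal_eq_zero] at h; linarith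
  · exact (Metric.measure_ball_pos volume y (lt_min hδ hε)).ne' (ac_gauss d h)

open Filter Topology in
lemma qmp_aff {d : ℕ} (b : Ed d) {s : ℝ} (hs : s ≠ 0) :
    Measure.QuasiMeasurePreserving (fun y : Ed d => b + s • y) (stdGaussian d) (stdGaussian d) := by
  have h1 : Measure.QuasiMeasurePreserving (fun y : Ed d => s • y) volume volume :=
    Measure.quasiMeasurePreserving_smul volume hs
  have h2 : Measure.QuasiMeasurePreserving (fun y : Ed d => b + y) volume volume :=
    (measurePreserving_add_left volume b).quasiMeasurePreserving
  exact (h2.comp h1).mono (gauss_ac d) (ac_gauss d)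

lemma OU_f_meas {d : ℕ} {R : ℝ} {ν : Measure (Ed d)} [IsProbabilityMeasure ν]
    (hR : ∀ᵐ z ∂ν, ‖z‖ ≤ R) (f : Ed d → ℝ)
    (hf : mconv (stdGaussian d) ν
      = (stdGaussian d).withDensity fun x => ENNReal.ofReal (f x))
    (hfm : AEMeasurable f (stdGaussian d)) (t : ℝ) (ht : 0 < t) (x : Ed d) :
    OU t f x = Gt ν (Real.exp (-t)) x := by
  have := gauss_prob d
  have hs : Real.sqrt (1 - Real.exp (-2 * t)) ≠ 0 := by
    have : Real.exp (-2 * t) < 1 := Real.exp_lt_one_iff.2 (by linarith)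
    exact (Real.sqrt_pos.2 (by linarith)).ne'
  have hgm : Measurable fun x => ENNReal.ofReal (Gt ν 1 x) :=
    (Gt_continuous hR 1).measurable.ennreal_ofReal
  rw [mconv_eq hR, withDensity_eq_iff_of_sigmaFinite hgm.aemeasurable hfm.ennreal_ofReal] at hf
  have hfg : f =ᵐ[stdGaussian d] Gt ν 1 := by
    filter_upwards [hf] with x hx
    have hg := Gt_pos hR 1 x
    have hfx : 0 < f x := by
      rw [← ENNReal.ofReal_pos, ← hx, ENNReal.ofReal_pos]; exact hg
    exact ((ENNReal.ofReal_eq_ofReal_iff hg.le hfx.le).1 hx).symm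
  rw [← OU_Gt hR t ht.le]
  have h := (qmp_aff (Real.exp (-t) • x) hs).ae hfg
  unfold OU
  exact integral_congr_ae h

lemma OU_f_nonmeas {d : ℕ} (f : Ed d → ℝ)
    (hfm : ¬ AEMeasurable f (stdGaussian d)) (t : ℝ) (ht : 0 < t) (x : Ed d) :
    OU t f x = 0 := by
  have hs : Real.sqrt (1 - Real.exp (-2 * t)) ≠ 0 := by
    have : Real.exp (-2 * t) < 1 := Real.exp_lt_one_iff.2 (by linarith)
    exact (Real.sqrt_pos.2 (by linarith)).ne'
  refine integral_non_aestronglyMeasurable fun h => hfm ?_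
  set s := Real.sqrt (1 - Real.exp (-2 * t))
  have h2 := h.aemeasurable.comp_quasiMeasurePreserving
    (qmp_aff (-(s⁻¹ • (Real.exp (-t) • x))) (inv_ne_zero hs))
  refine h2.congr (ae_of_all _ fun y => ?_)
  simp only [Function.comp]
  congr 1
  rw [smul_add, smul_neg, smul_inv_smul₀ hs, smul_inv_smul₀ hs]
  abel

/-- For `μ = γ_d ⋆ ν` with `ν` supported in a ball of radius `R`, and
`f = dμ/dγ_d`, one has `∇² log Q_t f(x) ⪯ e^{−2t}·R²·Id` for every `t ≥ 0` and `x`. -/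
theorem ou_hessian_upper_bound_mixture
    (d : ℕ) (R : ℝ) (ν : Measure (Ed d)) [IsProbabilityMeasure ν]
    (hν : msupport ν ⊆ Metric.closedBall 0 R)
    (f : Ed d → ℝ)
    (hf : mconv (stdGaussian d) ν
      = (stdGaussian d).withDensity fun x => ENNReal.ofReal (f x)) :
    ∀ t ≥ (0 : ℝ), ∀ x w : Ed d,
      hessQF (fun y => Real.log (OU t f y)) x w ≤ Real.exp (-2 * t) * R ^ 2 * ‖w‖ ^ 2 := by
  intro t ht x w
  have := gauss_prob d
  have hR := ae_norm_le hν
  have hexp : Real.exp (-2 * t) = Real.exp (-t) ^ 2 := by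
    rw [← Real.exp_nat_mul]; congr 1; push_cast; ring
  rw [hexp]
  rcases ht.lt_or_eq with ht | ht
  · by_cases hfm : AEMeasurable f (stdGaussian d)
    · refine hess_le hR _ _ (fun y => ⟨fun _ => y, tendsto_const_nhds, ?_⟩) x w
      simp only [OU_f_meas hR f hf hfm t ht]
      exact tendsto_const_nhds
    · have h0 : (fun y => Real.log (OU t f y)) = fun _ => 0 := by
        funext y; rw [OU_f_nonmeas f hfm t ht, Real.log_zero]
      rw [h0]
      simp only [hessQF, fderiv_fun_const, Pi.zero_apply, _root_.zero_apply]
      positivity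
  · subst ht
    have h0 : (fun y => Real.log (OU 0 f y)) = fun y => Real.log (f y) := by
      funext y; simp [OU]
    rw [h0]
    refine hess_le hR _ _ (fun y => ?_) x w
    simp only [neg_zero, Real.exp_zero]
    choose u hu1 hu2 using fun n : ℕ =>
      graph_zero hR f hf y (1 / ((n : ℝ) + 1)) Nat.one_div_pos_of_nat
    refine ⟨u, ?_, ?_⟩
    · rw [tendsto_iff_dist_tendsto_zero]
      exact squeeze_zero (fun _ => dist_nonneg) (fun n => (hu1 n).le)
        tendsto_one_div_add_atTop_nhds_zero_nat
    · refine (Real.continuousAt_log (Gt_pos hR 1 y).ne').tendsto.comp ?_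
      rw [tendsto_iff_dist_tendsto_zero]
      exact squeeze_zero (fun _ => dist_nonneg) (fun n => (hu2 n).le)
        tendsto_one_div_add_atTop_nhds_zero_nat
end
end
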